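/- arXiv:2510.07643 — 7 statements merged into one kernel-verified Lean document; each statement's English description precedes it below -/
import Mathlib

section
/- For any coprime positive integers a and u with a ≠ u, the cuboid polynomial P_{a,u}(t) is irreducible in ℤ[t]. -/
open Polynomial

/-- The cuboid polynomial `P_{a,u}(t) = t⁸ + 6Δ t⁶ + (Δ² − 2a²u²) t⁴ − 6Δ a²u² t² + a⁴u⁴`,
where `Δ = u² − a²`. -/
noncomputable def cuboidPoly (a u : ℤ) : Polynomial ℤ :=
  X ^ 8 + C (6 * (u ^ 2 - a ^ 2)) * X ^ 6
    + C ((u ^ 2 - a ^ 2) ^ 2 - 2 * a ^ 2 * u ^ 2) * X ^ 4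
    + C (-(6 * (u ^ 2 - a ^ 2) * (a ^ 2 * u ^ 2))) * X ^ 2
    + C (a ^ 4 * u ^ 4)

/-!
Put `d = u² - a²` and `m = a u`. Over `ℚ(√2)` the cuboid polynomial is the product of
`f = t⁴ + (3 + 2√2) d t² - m²` and its conjugate, so if `f` is irreducible, any factor over `ℤ`
divisible by `f` is also divisible by the conjugate of `f`, hence is everything.

A biquadratic `t⁴ + b t² + c` is irreducible once neither `c` nor `b² - 4c` is a square. Here
`c = -m²` is negative in a real field, and `b² - 4c = (x + y√2)²` means `x² + 2y² = 17d² + 4m²` and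
`xy = 6d²`. The ratio `r = (2y - x) / (x - y)` then makes `(r² - 1)(r² - 4)` a nonzero rational
square, so it suffices to show that `r² - 1 = q² (r² - 4)` has no rational solution with `r q ≠ 0`.
Up to a twist by `±1, ±3`, such a solution makes `x² - y²` and `x² - 4y²` simultaneously squares for
some integers `x`, `y ≠ 0`; comparing the two resulting parametrised Pythagorean triples with
hypotenuse `x` yields another solution `(r, q)`, and Fermat descent on `|y|` applies.
-/

theorem isSquare_of_mul_quadratics_eq_biquadratic {R : Type*} [CommRing R] [IsDomain R]
    {b c s t s' t' : R}
    (h : (X ^ 2 + C s * X + C t) * (X ^ 2 + C s' * X + C t') = X ^ 4 + C b * X ^ 2 + C c) :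
    IsSquare (b ^ 2 - 4 * c) ∨ IsSquare c := by
  have expand : (X ^ 2 + C s * X + C t) * (X ^ 2 + C s' * X + C t') =
      X ^ 4 + C (s + s') * X ^ 3 + C (t + s * s' + t') * X ^ 2 + C (s * t' + t * s') * X
        + C (t * t') := by
    simp only [map_add, map_mul]
    ring
  have coeff_eq (n : ℕ) := congrArg (coeff · n) (expand.symm.trans h)
  have h₃ : s + s' = 0 := by simpa [-map_add, -map_mul, coeff_X, coeff_C] using coeff_eq 3
  have h₂ : t + s * s' + t' = b := by simpa [-map_add, -map_mul, coeff_X, coeff_C] using coeff_eq 2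
  have h₁ : s * t' + t * s' = 0 := by simpa [-map_add, -map_mul, coeff_X, coeff_C] using coeff_eq 1
  have h₀ : t * t' = c := by simpa [-map_add, -map_mul, coeff_X, coeff_C] using coeff_eq 0
  obtain rfl : s' = -s := (neg_eq_of_add_eq_zero_right h₃).symm
  have hst : s * (t' - t) = 0 := by linear_combination h₁
  subst h₂ h₀
  rcases mul_eq_zero.mp hst with rfl | htt
  · exact .inl ⟨t - t', by ring⟩
  · exact .inr ⟨t, by rw [sub_eq_zero.mp htt]⟩

theorem eq_X_sq_add_of_monic_of_natDegree_eq_two {R : Type*} [Semiring R] {f : R[X]}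
    (hf : f.Monic) (hdeg : f.natDegree = 2) :
    f = X ^ 2 + C (f.coeff 1) * X + C (f.coeff 0) := by
  have := hf.as_sum
  rw [hdeg] at this
  simpa [Finset.sum_range_succ, add_assoc, add_comm, add_left_comm] using this

theorem irreducible_biquadratic {R : Type*} [CommRing R] [IsDomain R] {b c : R}
    (hdisc : ¬IsSquare (b ^ 2 - 4 * c)) (hc : ¬IsSquare c) :
    Irreducible (X ^ 4 + C b * X ^ 2 + C c) := by
  have hmonic : (X ^ 4 + C b * X ^ 2 + C c).Monic := by monicity!
  have hdeg : (X ^ 4 + C b * X ^ 2 + C c).natDegree = 4 := by compute_degree!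
  refine hmonic.irreducible_iff_natDegree'.mpr
    ⟨fun h ↦ by simp [h] at hdeg, fun f g hf hg hfg hmem ↦ ?_⟩
  have hadd : f.natDegree + g.natDegree = 4 := by rw [← hf.natDegree_mul hg, hfg, hdeg]
  rw [hdeg, Finset.mem_Ioc] at hmem
  obtain hg₁ | hg₂ : g.natDegree = 1 ∨ g.natDegree = 2 := by omega
  · have hroot : (X ^ 4 + C b * X ^ 2 + C c).eval (-g.coeff 0) = 0 := by
      rw [← hfg, hg.eq_X_add_C hg₁]
      simp
    refine hdisc ⟨2 * g.coeff 0 ^ 2 + b, ?_⟩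
    simp only [eval_add, eval_mul, eval_pow, eval_X, eval_C] at hroot
    linear_combination -4 * hroot
  · rw [eq_X_sq_add_of_monic_of_natDegree_eq_two hf (by omega),
      eq_X_sq_add_of_monic_of_natDegree_eq_two hg hg₂] at hfg
    exact (isSquare_of_mul_quadratics_eq_biquadratic hfg).elim hdisc hc

theorem irreducible_of_map_eq_mul_map {R K : Type*} [CommRing R] [IsDomain R] [Field K]
    {ι : R →+* K} {σ : K →+* K} (hσ : σ.comp ι = ι) {P : R[X]} (hP : P.Monic)
    {f : K[X]} (hf : f.Monic) (hirr : Irreducible f) (hne : f.map σ ≠ f)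
    (hPf : P.map ι = f * f.map σ) : Irreducible P := by
  have hcop : IsCoprime f (f.map σ) := hirr.coprime_iff_not_dvd.mpr fun hdvd ↦
    hne (eq_of_monic_of_dvd_of_natDegree_le hf (hf.map σ) hdvd (natDegree_map σ).le)
  have dvd_of_dvd {g : R[X]} (h : f ∣ g.map ι) : P.map ι ∣ g.map ι := by
    have hσg : f.map σ ∣ g.map ι := by
      simpa only [Polynomial.map_map, hσ] using Polynomial.map_dvd σ h
    exact hPf ▸ hcop.mul_dvd h hσg
  have hdeg_le {g : R[X]} (hg : g.Monic) (h : f ∣ g.map ι) : P.natDegree ≤ g.natDegree := by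
    simpa only [hP.natDegree_map, hg.natDegree_map] using
      natDegree_le_of_dvd (dvd_of_dvd h) (hg.map ι).ne_zero
  refine hP.irreducible_iff_natDegree.mpr ⟨?_, fun g h hg hh hgh ↦ ?_⟩
  · rintro rfl
    exact hirr.not_isUnit (.of_mul_eq_one _ (by simpa using hPf.symm))
  · have hadd : g.natDegree + h.natDegree = P.natDegree := by rw [← hg.natDegree_mul hh, hgh]
    have hdvd : f ∣ g.map ι * h.map ι := by
      rw [← Polynomial.map_mul, hgh, hPf]
      exact dvd_mul_right ..
    rcases hirr.prime.dvd_or_dvd hdvd with hfg | hfh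
    · have := hdeg_le hg hfg; omega
    · have := hdeg_le hh hfh; omega

/-- The pair `(x, y)` makes the concordant forms (in Euler's sense) `x² - y²` and `x² - 4y²`
simultaneously squares; the infinite descent runs over such pairs. -/
def IsConcordant (x y : ℤ) : Prop :=
  IsSquare (x ^ 2 - y ^ 2) ∧ IsSquare (x ^ 2 - 4 * y ^ 2)

theorem IsConcordant.left_ne_zero {x y : ℤ} (h : IsConcordant x y) (hy : y ≠ 0) : x ≠ 0 := by
  rintro rfl
  have hy2 : 0 < y ^ 2 := by positivity
  linarith [h.1.nonneg]

theorem isSquare_of_isSquare_sq_mul {g z : ℤ} (hg : g ≠ 0) (h : IsSquare (g ^ 2 * z)) :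
    IsSquare z := by
  rw [← Rat.isSquare_intCast_iff] at h ⊢
  have hg' : (g : ℚ) ^ 2 ≠ 0 := by positivity
  simpa [hg'] using h.div (IsSquare.sq (g : ℚ))

theorem even_and_even_of_four_dvd_sq_add_sq {x y : ℤ} (h : 4 ∣ x ^ 2 + y ^ 2) :
    Even x ∧ Even y := by
  have sq_emod (z : ℤ) : Even z ∧ z ^ 2 % 4 = 0 ∨ z ^ 2 % 4 = 1 :=
    z.even_or_odd.imp (fun hz ↦ ⟨hz, Int.emod_eq_zero_of_dvd (pow_dvd_pow_of_dvd hz.two_dvd 2)⟩)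
      Int.sq_mod_four_eq_one_of_odd
  rcases sq_emod x with ⟨hx, hx'⟩ | hx' <;> rcases sq_emod y with ⟨hy, hy'⟩ | hy'
  · exact ⟨hx, hy⟩
  all_goals omega

theorem exists_isConcordant_half {A D : ℤ} (hsub : IsSquare (A ^ 2 - D ^ 2))
    (hfour : IsSquare (4 * A ^ 2 - D ^ 2)) : ∃ y, D = 2 * y ∧ IsConcordant A y := by
  obtain ⟨C, hC⟩ := hfour
  have hDeven : Even D :=
    (even_and_even_of_four_dvd_sq_add_sq (x := C) ⟨A ^ 2, by linear_combination -hC⟩).2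
  obtain ⟨y, rfl⟩ := hDeven.two_dvd
  refine ⟨y, rfl, isSquare_of_isSquare_sq_mul two_ne_zero ⟨C, ?_⟩, ?_⟩
  · linear_combination hC
  · convert hsub using 1
    ring

theorem exists_isConcordant_of_twist {A B C D e : ℤ} (he : e = 1 ∨ e = -1 ∨ e = 3 ∨ e = -3)
    (hB : D ^ 2 - A ^ 2 = e * B ^ 2) (hC : D ^ 2 - 4 * A ^ 2 = e * C ^ 2) :
    ∃ x y, IsConcordant x y ∧ y ∣ A * B * C * D := by
  rcases he with rfl | rfl | rfl | rfl
  · exact ⟨D, A, ⟨⟨B, by linear_combination hB⟩, ⟨C, by linear_combination hC⟩⟩,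
      ⟨B * C * D, by ring⟩⟩
  · obtain ⟨y, rfl, hy⟩ := exists_isConcordant_half (A := A) (D := D)
      ⟨B, by linear_combination -hB⟩ ⟨C, by linear_combination -hC⟩
    exact ⟨A, y, hy, ⟨2 * A * B * C, by ring⟩⟩
  · obtain ⟨y, rfl, hy⟩ := exists_isConcordant_half (A := B) (D := C)
      ⟨A, by linarith⟩ ⟨D, by linarith⟩
    exact ⟨B, y, hy, ⟨2 * A * B * D, by ring⟩⟩
  · exact ⟨C, B, ⟨⟨A, by linarith⟩, ⟨D, by linarith⟩⟩, ⟨A * C * D, by ring⟩⟩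

theorem dvd_three_of_dvd_sq_sub_sq {R : Type*} [CommRing R] {e A D : R} (hAD : IsCoprime A D)
    (h₁ : e ∣ D ^ 2 - A ^ 2) (h₄ : e ∣ D ^ 2 - 4 * A ^ 2) : e ∣ 3 := by
  obtain ⟨s, t, hst⟩ : IsCoprime (A ^ 2) (D ^ 2) := hAD.pow
  have key : 3 = (s + 4 * t) * (D ^ 2 - A ^ 2) - (s + t) * (D ^ 2 - 4 * A ^ 2) := by
    linear_combination -3 * hst
  exact key ▸ dvd_sub (h₁.mul_left _) (h₄.mul_left _)

theorem exists_isConcordant_of_ratio_eq_sq {A B C D : ℤ} (hAD : IsCoprime A D)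
    (hBC : IsCoprime B C) (hB : B ≠ 0)
    (h : C ^ 2 * (D ^ 2 - A ^ 2) = B ^ 2 * (D ^ 2 - 4 * A ^ 2)) :
    ∃ x y, IsConcordant x y ∧ y ∣ A * B * C * D := by
  obtain ⟨e, he₁⟩ : B ^ 2 ∣ D ^ 2 - A ^ 2 :=
    (hBC.pow (m := 2) (n := 2)).dvd_of_dvd_mul_left ⟨_, h⟩
  have he₄ : D ^ 2 - 4 * A ^ 2 = C ^ 2 * e :=
    mul_left_cancel₀ (pow_ne_zero 2 hB) (by linear_combination C ^ 2 * he₁ - h)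
  have he : e.natAbs ∣ 3 := by
    simpa using Int.natAbs_dvd_natAbs.mpr <|
      dvd_three_of_dvd_sq_sub_sq hAD ⟨B ^ 2, by rw [he₁, mul_comm]⟩ ⟨C ^ 2, by rw [he₄, mul_comm]⟩
  refine exists_isConcordant_of_twist (e := e) ?_ (by rw [he₁, mul_comm]) (by rw [he₄, mul_comm])
  rcases (Nat.dvd_prime Nat.prime_three).mp he with he | he <;> omega

theorem odd_and_odd_of_sq_sub_sq_eq_sq {x y p q : ℤ} (hxy : IsCoprime x y)
    (hp : x ^ 2 - y ^ 2 = p ^ 2) (hq : x ^ 2 - 4 * y ^ 2 = q ^ 2) : Odd p ∧ Odd q := by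
  have hx : Odd x := by
    by_contra hx
    rw [Int.not_odd_iff_even] at hx
    have hsum : 4 ∣ y ^ 2 + p ^ 2 := by
      rw [← hp, add_sub_cancel]
      exact pow_dvd_pow_of_dvd hx.two_dvd 2
    have hy := (even_and_even_of_four_dvd_sq_add_sq hsum).1
    exact Int.prime_two.not_isUnit (hxy.isUnit_of_dvd' hx.two_dvd hy.two_dvd)
  have hqodd : Odd q := by
    rw [← Int.odd_pow' two_ne_zero, ← hq]
    exact hx.pow.sub_even ⟨2 * y ^ 2, by ring⟩
  have hy : Even y := by
    by_contra hy
    rw [Int.not_even_iff_odd] at hy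
    have := Int.eight_dvd_sq_sub_one_of_odd hx
    have := Int.eight_dvd_sq_sub_one_of_odd hy
    have := Int.eight_dvd_sq_sub_one_of_odd hqodd
    omega
  refine ⟨?_, hqodd⟩
  rw [← Int.odd_pow' two_ne_zero, ← hp]
  exact hx.pow.sub_even (hy.pow_of_ne_zero two_ne_zero)

theorem exists_factors_of_sq_add_sq_eq {k l m n : ℤ} (hkl : IsCoprime (2 * k) l)
    (hmn : m * n ≠ 0) (hprod : k * l = m * n) (hsum : (2 * k) ^ 2 + l ^ 2 = m ^ 2 + n ^ 2) :
    ∃ A B C D : ℤ, IsCoprime A D ∧ IsCoprime B C ∧ m * n = A * B * C * D ∧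
      C ^ 2 * (D ^ 2 - A ^ 2) = B ^ 2 * (D ^ 2 - 4 * A ^ 2) := by
  obtain ⟨A, B, ⟨C, rfl⟩, ⟨D, rfl⟩, rfl⟩ := exists_dvd_and_dvd_of_dvd_mul (Dvd.intro l hprod)
  have hAB : A * B ≠ 0 := left_ne_zero_of_mul (b := C * D) (by convert hmn using 1; ring)
  obtain rfl : l = C * D := mul_left_cancel₀ hAB (by linear_combination hprod)
  have hco : IsCoprime (A * B) (C * D) := hkl.of_mul_left_right
  exact ⟨A, B, C, D, hco.of_mul_left_left.of_mul_right_right,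
    hco.of_mul_left_right.of_mul_right_left, by ring, by linear_combination hsum⟩

theorem isCoprime_of_sq_sub_mul_sq_eq_sq {R : Type*} [CommRing R] {x y p k : R}
    (hxy : IsCoprime x y) (hp : x ^ 2 - k * y ^ 2 = p ^ 2) : IsCoprime p y := by
  have hp2 : IsCoprime (p ^ 2) y := by
    rw [← hp, show x ^ 2 - k * y ^ 2 = x ^ 2 + y * (-k * y) by ring]
    exact hxy.pow_left.add_mul_left_left _
  exact (IsCoprime.pow_left_iff two_pos).mp hp2

theorem IsConcordant.exists_factors {x y : ℤ} (h : IsConcordant x y) (hx : 0 < x) (hy : y ≠ 0)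
    (hxy : IsCoprime x y) :
    ∃ A B C D : ℤ, IsCoprime A D ∧ IsCoprime B C ∧ y = 2 * (A * B * C * D) ∧
      C ^ 2 * (D ^ 2 - A ^ 2) = B ^ 2 * (D ^ 2 - 4 * A ^ 2) := by
  obtain ⟨⟨p, hp⟩, ⟨q, hq⟩⟩ := h
  rw [← pow_two] at hp hq
  obtain ⟨hpodd, hqodd⟩ := odd_and_odd_of_sq_sub_sq_eq_sq hxy hp hq
  have hpy : IsCoprime p y := isCoprime_of_sq_sub_mul_sq_eq_sq (k := 1) hxy (by rwa [one_mul])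
  have hqy : IsCoprime q (2 * y) :=
    (Int.isCoprime_two_right.mpr hqodd).mul_right (isCoprime_of_sq_sub_mul_sq_eq_sq hxy hq)
  have hpyx : PythagoreanTriple p y x := by unfold PythagoreanTriple; linear_combination -hp
  have hqyx : PythagoreanTriple q (2 * y) x := by unfold PythagoreanTriple; linear_combination -hq
  obtain ⟨m, n, -, hymn, hxmn, -⟩ := hpyx.coprime_classification'
    (Int.isCoprime_iff_gcd_eq_one.mp hpy) (Int.odd_iff.mp hpodd) hx
  obtain ⟨k, l, -, hykl, hxkl, hgcd, hparity, -⟩ := hqyx.coprime_classification'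
    (Int.isCoprime_iff_gcd_eq_one.mp hqy) (Int.odd_iff.mp hqodd) hx
  have hkl : IsCoprime k l := Int.isCoprime_iff_gcd_eq_one.mpr hgcd
  rw [mul_assoc] at hymn
  have hmn : m * n ≠ 0 := right_ne_zero_of_mul (hymn ▸ hy)
  wlog hk : Even k generalizing k l
  · refine this l k (by linear_combination hykl) (by linear_combination hxkl)
      (by rwa [Int.gcd_comm]) (by tauto) hkl.symm ?_
    rw [Int.even_iff] at hk ⊢
    omega
  obtain ⟨k, rfl⟩ := hk.two_dvd
  obtain ⟨A, B, C, D, hAD, hBC, hABCD, heq⟩ := exists_factors_of_sq_add_sq_eq hkl hmn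
    (by linarith) (hxkl.symm.trans hxmn)
  exact ⟨A, B, C, D, hAD, hBC, hABCD ▸ hymn, heq⟩

theorem IsConcordant.exists_isCoprime {x y : ℤ} (h : IsConcordant x y) (hy : y ≠ 0) :
    ∃ x' y', IsConcordant x' y' ∧ 0 < x' ∧ IsCoprime x' y' ∧ y' ∣ y := by
  have hgcd : 0 < Int.gcd |x| y := Int.gcd_pos_of_ne_zero_right _ hy
  obtain ⟨x', y', hco, hx', hy'⟩ := Int.exists_gcd_one hgcd
  set g : ℤ := (Int.gcd |x| y : ℤ)
  have hg : 0 < g := Int.natCast_pos.mpr hgcd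
  have hsq : x ^ 2 = (x' * g) ^ 2 := by rw [← hx', sq_abs]
  refine ⟨x', y', ⟨?_, ?_⟩, ?_, Int.isCoprime_iff_gcd_eq_one.mpr hco, ⟨g, hy'⟩⟩
  · refine isSquare_of_isSquare_sq_mul hg.ne' ?_
    convert h.1 using 1
    rw [hsq, hy']
    ring
  · refine isSquare_of_isSquare_sq_mul hg.ne' ?_
    convert h.2 using 1
    rw [hsq, hy']
    ring
  · have hx : 0 < |x| := abs_pos.mpr (h.left_ne_zero hy)
    exact pos_of_mul_pos_left (hx' ▸ hx) hg.le

theorem IsConcordant.eq_zero {x y : ℤ} (h : IsConcordant x y) : y = 0 := by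
  induction hn : y.natAbs using Nat.strong_induction_on generalizing x y with
  | _ n ih =>
    subst hn
    by_contra hy
    obtain ⟨x', y', h', hx', hco, hdvd⟩ := h.exists_isCoprime hy
    have hy' : y' ≠ 0 := ne_zero_of_dvd_ne_zero hy hdvd
    obtain ⟨A, B, C, D, hAD, hBC, rfl, heq⟩ := h'.exists_factors hx' hy' hco
    have hABCD : A * B * C * D ≠ 0 := right_ne_zero_of_mul hy'
    have hB : B ≠ 0 := by rintro rfl; simp at hABCD
    obtain ⟨x'', y'', h'', hdvd''⟩ := exists_isConcordant_of_ratio_eq_sq hAD hBC hB heq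
    have hlt : y''.natAbs < y.natAbs := by
      have := Int.natAbs_le_of_dvd_ne_zero hdvd'' hABCD
      have := Int.natAbs_le_of_dvd_ne_zero hdvd hy
      have := Int.natAbs_pos.mpr hABCD
      omega
    exact ne_zero_of_dvd_ne_zero hABCD hdvd'' (ih _ hlt h'' rfl)

theorem eq_zero_or_eq_zero_of_sq_sub_one_eq_sq_mul_sq_sub_four {r q : ℚ}
    (h : r ^ 2 - 1 = q ^ 2 * (r ^ 2 - 4)) : r = 0 ∨ q = 0 := by
  by_contra! hrq
  have heq : (q.den : ℤ) ^ 2 * (r.num ^ 2 - (r.den : ℤ) ^ 2) =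
      q.num ^ 2 * (r.num ^ 2 - 4 * (r.den : ℤ) ^ 2) := by
    rw [← r.num_div_den, ← q.num_div_den] at h
    field_simp at h
    qify
    linear_combination h
  obtain ⟨x, y, hxy, hdvd⟩ := exists_isConcordant_of_ratio_eq_sq r.isCoprime_num_den.symm
    q.isCoprime_num_den (Rat.num_ne_zero.mpr hrq.2) heq
  rw [hxy.eq_zero, zero_dvd_iff] at hdvd
  simp [hrq] at hdvd

theorem sq_sub_sq_mul_sq_sub_four_mul_sq_ne_sq {x y w : ℚ} (hx : x ≠ 0) (hy : y ≠ 0) (hw : w ≠ 0) :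
    (x ^ 2 - y ^ 2) * (x ^ 2 - 4 * y ^ 2) ≠ w ^ 2 := by
  intro h
  have hne : x ^ 2 - 4 * y ^ 2 ≠ 0 := right_ne_zero_of_mul (h ▸ pow_ne_zero 2 hw)
  have hone : (x / y) ^ 2 - 1 = (x ^ 2 - y ^ 2) / y ^ 2 := by field_simp
  have hfour : (x / y) ^ 2 - 4 = (x ^ 2 - 4 * y ^ 2) / y ^ 2 := by field_simp
  have hcurve : (x / y) ^ 2 - 1 = (w / (x ^ 2 - 4 * y ^ 2)) ^ 2 * ((x / y) ^ 2 - 4) := by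
    rw [hone, hfour, div_pow, ← h]
    generalize x ^ 2 - 4 * y ^ 2 = v at hne ⊢
    field_simp
  simpa [hx, hy, hw, hne] using eq_zero_or_eq_zero_of_sq_sub_one_eq_sq_mul_sq_sub_four hcurve

section QSqrtTwo

open scoped QuadraticAlgebra

instance fact_sq_ne_two : Fact (∀ r : ℚ, r ^ 2 ≠ 2 + 0 * r) where
  out r h := by
    have : ¬IsSquare (2 : ℚ) := by norm_num
    exact this ⟨r, by linear_combination -h⟩

/-- The field `ℚ(√2)`, in which `⟨x, y⟩` stands for `x + y√2`. -/
abbrev QSqrtTwo : Type :=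
  QuadraticAlgebra ℚ 2 0

theorem QSqrtTwo.not_isSquare_of_neg {c : ℚ} (hc : c < 0) : ¬IsSquare (⟨c, 0⟩ : QSqrtTwo) := by
  rintro ⟨⟨x, y⟩, h⟩
  have hre : c = x * x + 2 * y * y := congrArg QuadraticAlgebra.re h
  nlinarith [mul_self_nonneg x, mul_self_nonneg y]

theorem sq_add_two_mul_sq_ne_of_mul_eq {x y d m : ℚ} (hd : d ≠ 0) (hm : m ≠ 0)
    (hxy : x * y = 6 * d ^ 2) : x ^ 2 + 2 * y ^ 2 ≠ 17 * d ^ 2 + 4 * m ^ 2 := by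
  intro hsum
  have hr : 2 * y - x ≠ 0 := fun h ↦ by
    obtain rfl : x = 2 * y := by linear_combination -h
    have : ¬IsSquare (3 : ℚ) := by norm_num
    exact this ⟨y / d, by field_simp; linear_combination -hxy / 2⟩
  have hs : x - y ≠ 0 := fun h ↦ by
    obtain rfl : x = y := by linear_combination h
    have : ¬IsSquare (6 : ℚ) := by norm_num
    exact this ⟨x / d, by field_simp; linear_combination -hxy⟩
  have hprod : ((2 * y - x) ^ 2 - (x - y) ^ 2) * ((2 * y - x) ^ 2 - 4 * (x - y) ^ 2) =
      (12 * d * m) ^ 2 := by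
    linear_combination (6 * x * y) * hsum + (24 * m ^ 2 - 17 * x * y) * hxy
  exact sq_sub_sq_mul_sq_sub_four_mul_sq_ne_sq hr hs (by positivity) hprod

theorem QSqrtTwo.not_isSquare_discrim {d m : ℚ} (hd : d ≠ 0) (hm : m ≠ 0) :
    ¬IsSquare ((⟨3 * d, 2 * d⟩ : QSqrtTwo) ^ 2 - 4 * ⟨-m ^ 2, 0⟩) := by
  rintro ⟨⟨x, y⟩, h⟩
  have hre := congrArg QuadraticAlgebra.re h
  have him := congrArg QuadraticAlgebra.im h
  simp only [pow_two, QuadraticAlgebra.mk_mul_mk, QuadraticAlgebra.re_sub, QuadraticAlgebra.re_mul,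
    QuadraticAlgebra.re_ofNat, QuadraticAlgebra.im_sub, QuadraticAlgebra.im_mul,
    QuadraticAlgebra.im_ofNat] at hre him
  exact sq_add_two_mul_sq_ne_of_mul_eq (x := x) (y := y) hd hm
    (by linear_combination -him / 2) (by linear_combination -hre)

/-- The cuboid polynomial with `u² - a²` and `a u` replaced by independent parameters `d`
and `m`. -/
noncomputable def parametricCuboidPoly (d m : ℤ) : ℤ[X] :=
  X ^ 8 + C (6 * d) * X ^ 6 + C (d ^ 2 - 2 * m ^ 2) * X ^ 4 + C (-(6 * d * m ^ 2)) * X ^ 2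
    + C (m ^ 4)

/-- The factor `t⁴ + (3 + 2√2) d t² - m²` of the parametric cuboid polynomial over `ℚ(√2)`; the
other factor is its conjugate. -/
noncomputable def cuboidQuartic (d m : ℚ) : QSqrtTwo[X] :=
  X ^ 4 + C ⟨3 * d, 2 * d⟩ * X ^ 2 + C ⟨-m ^ 2, 0⟩

theorem cuboidQuartic_monic (d m : ℚ) : (cuboidQuartic d m).Monic := by
  unfold cuboidQuartic
  monicity!

theorem cuboidQuartic_irreducible {d m : ℚ} (hd : d ≠ 0) (hm : m ≠ 0) :
    Irreducible (cuboidQuartic d m) :=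
  irreducible_biquadratic (QSqrtTwo.not_isSquare_discrim hd hm)
    (QSqrtTwo.not_isSquare_of_neg (neg_lt_zero.mpr (by positivity)))

theorem map_star_cuboidQuartic (d m : ℚ) :
    (cuboidQuartic d m).map (starRingEnd QSqrtTwo) =
      X ^ 4 + C ⟨3 * d, -(2 * d)⟩ * X ^ 2 + C ⟨-m ^ 2, 0⟩ := by
  simp [cuboidQuartic, starRingEnd_apply]

theorem map_star_cuboidQuartic_ne {d : ℚ} (hd : d ≠ 0) (m : ℚ) :
    (cuboidQuartic d m).map (starRingEnd QSqrtTwo) ≠ cuboidQuartic d m := by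
  intro h
  rw [map_star_cuboidQuartic, cuboidQuartic] at h
  have him : -(2 * d) = 2 * d := by
    simpa [coeff_C] using congrArg (fun f ↦ (coeff f 2).im) h
  exact hd (by linear_combination -him / 4)

theorem map_parametricCuboidPoly (d m : ℤ) :
    (parametricCuboidPoly d m).map (Int.castRingHom QSqrtTwo) =
      cuboidQuartic d m * (cuboidQuartic d m).map (starRingEnd QSqrtTwo) := by
  set b : QSqrtTwo := ⟨3 * d, 2 * d⟩
  set b' : QSqrtTwo := ⟨3 * d, -(2 * d)⟩
  have hsum : b + b' = 6 * d := by ext <;> simp [b, b']; ring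
  have hprod : b * b' = d ^ 2 := by ext <;> simp [b, b', pow_two] <;> ring
  have hconst : (⟨-(m : ℚ) ^ 2, 0⟩ : QSqrtTwo) = -(m : QSqrtTwo) ^ 2 := by
    ext <;> simp [pow_two]
  rw [map_star_cuboidQuartic, cuboidQuartic, hconst]
  replace hsum := congrArg (C : QSqrtTwo → QSqrtTwo[X]) hsum
  replace hprod := congrArg (C : QSqrtTwo → QSqrtTwo[X]) hprod
  simp only [map_add, map_mul, map_pow, map_neg, map_ofNat C 6, map_intCast] at hsum hprod ⊢
  simp only [parametricCuboidPoly, eq_intCast, Int.cast_mul, Int.cast_ofNat, Int.cast_sub,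
    Int.cast_pow, Int.cast_neg, Polynomial.map_add, Polynomial.map_pow, map_X, Polynomial.map_mul,
    Polynomial.map_ofNat, Polynomial.map_intCast, Polynomial.map_sub, Polynomial.map_neg]
  linear_combination (m ^ 2 * X ^ 2 - X ^ 6) * hsum - X ^ 4 * hprod

end QSqrtTwo

theorem cuboidPoly_irreducible_general {d m : ℤ} (hd : d ≠ 0) (hm : m ≠ 0) :
    Irreducible (parametricCuboidPoly d m) := by
  have hmonic : (parametricCuboidPoly d m).Monic := by
    unfold parametricCuboidPoly
    monicity!
  have hd' : (d : ℚ) ≠ 0 := Int.cast_ne_zero.mpr hd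
  have hm' : (m : ℚ) ≠ 0 := Int.cast_ne_zero.mpr hm
  exact irreducible_of_map_eq_mul_map (RingHom.ext_int _ _) hmonic (cuboidQuartic_monic d m)
    (cuboidQuartic_irreducible hd' hm') (map_star_cuboidQuartic_ne hd' m)
    (map_parametricCuboidPoly d m)

theorem cuboidPoly_irreducible (a u : ℤ) (ha : 0 < a) (hu : 0 < u)
    (hco : IsCoprime a u) (hne : a ≠ u) :
    Irreducible (cuboidPoly a u) := by
  have hΔ : u ^ 2 - a ^ 2 ≠ 0 := sub_ne_zero.mpr fun h ↦ hne ((sq_eq_sq₀ ha.le hu.le).mp h.symm)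
  simpa only [parametricCuboidPoly, cuboidPoly, mul_pow, mul_assoc] using
    cuboidPoly_irreducible_general hΔ (mul_ne_zero ha.ne' hu.ne')
end

section
/- For coprime positive integers a ≠ u (so Δ = u² − a² ≠ 0), there is no monic polynomial F(t) = t⁴ + α t³ + β t² + γ t + δ ∈ ℤ[t] such that P_{a,u}(t) = F(t)·F(−t). In particular, no factorization of P_{a,u} into two monic quartics of conjugate-pair type exists. -/
open Polynomial

/-!
Write `Δ = u² - a²` and `m = a u`. Comparing constant terms in `P(t) = F(t) F(-t)` gives
`δ = ± m²`, and the remaining coefficients then combine into a vanishing sum of squares. For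
`δ = m²` it is `(α γ - 4 m²)² + 32 (Δ m)² = 0`; for `δ = -m²` it is `γ² + (m α)² = 0`, which
reduces the other equations to `32 (Δ m)² = 0`. Both force `Δ m = 0`, over every ordered ring.
-/

section Semiring

variable {R : Type*} [Semiring R]

/-- The monic even polynomial `X⁸ + c₆ X⁶ + c₄ X⁴ + c₂ X² + c₀`: the common shape of the cuboid
polynomial and of `F(X) F(-X)` for a monic quartic `F`. -/
noncomputable def evenMonicOctic (c₆ c₄ c₂ c₀ : R) : R[X] :=
  X ^ 8 + C c₆ * X ^ 6 + C c₄ * X ^ 4 + C c₂ * X ^ 2 + C c₀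

theorem evenMonicOctic_inj {c₆ c₄ c₂ c₀ d₆ d₄ d₂ d₀ : R} :
    evenMonicOctic c₆ c₄ c₂ c₀ = evenMonicOctic d₆ d₄ d₂ d₀ ↔
      c₆ = d₆ ∧ c₄ = d₄ ∧ c₂ = d₂ ∧ c₀ = d₀ := by
  refine ⟨fun h ↦ ?_, by rintro ⟨rfl, rfl, rfl, rfl⟩; rfl⟩
  have hcoeff (n : ℕ) := congrArg (coeff · n) h
  simp only [evenMonicOctic, coeff_add, coeff_C_mul, coeff_X_pow, coeff_C] at hcoeff
  exact ⟨by simpa using hcoeff 6, by simpa using hcoeff 4, by simpa using hcoeff 2,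
    by simpa using hcoeff 0⟩

end Semiring

section CommRing

variable {R : Type*} [CommRing R]

theorem monicQuartic_mul_comp_neg_X (α β γ δ : R) :
    (X ^ 4 + C α * X ^ 3 + C β * X ^ 2 + C γ * X + C δ) *
        ((X ^ 4 + C α * X ^ 3 + C β * X ^ 2 + C γ * X + C δ).comp (-X)) =
      evenMonicOctic (2 * β - α ^ 2) (β ^ 2 + 2 * δ - 2 * α * γ) (2 * β * δ - γ ^ 2) (δ ^ 2) := by
  simp only [evenMonicOctic, add_comp, mul_comp, pow_comp, X_comp, C_comp, C_add, C_sub, C_mul,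
    C_pow, C_ofNat]
  ring

theorem map_cuboidPoly (a u : ℤ) :
    (cuboidPoly a u).map (Int.castRingHom R) =
      evenMonicOctic (6 * (u ^ 2 - a ^ 2 : R)) ((u ^ 2 - a ^ 2 : R) ^ 2 - 2 * (a * u : R) ^ 2)
        (-(6 * (u ^ 2 - a ^ 2 : R) * (a * u : R) ^ 2)) ((a * u : R) ^ 4) := by
  simp [cuboidPoly, evenMonicOctic, mul_pow, mul_assoc, C_ofNat]

end CommRing

section OrderedRing

variable {R : Type*} [CommRing R] [LinearOrder R] [IsStrictOrderedRing R]

variable {D m α β γ δ : R}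

theorem mul_eq_zero_of_conjugate_pair_coeffs_of_eq_sq (hδ : δ = m ^ 2)
    (h₆ : 6 * D = 2 * β - α ^ 2) (h₄ : D ^ 2 - 2 * m ^ 2 = β ^ 2 + 2 * δ - 2 * α * γ)
    (h₂ : -(6 * D * m ^ 2) = 2 * β * δ - γ ^ 2) : D * m = 0 := by
  subst hδ
  have hβ : 2 * β = α ^ 2 + 6 * D := by linear_combination -h₆
  have hγ : γ ^ 2 = m ^ 2 * (α ^ 2 + 12 * D) := by linear_combination h₂ + m ^ 2 * hβ
  have hα : α ^ 4 + 12 * D * α ^ 2 + 32 * D ^ 2 + 16 * m ^ 2 - 8 * α * γ = 0 := by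
    linear_combination -4 * h₄ - (2 * β + α ^ 2 + 6 * D) * hβ
  have hsum : (α * γ - 4 * m ^ 2) ^ 2 + 32 * (D * m) ^ 2 = 0 := by
    linear_combination m ^ 2 * hα + α ^ 2 * hγ
  have hsq : (D * m) ^ 2 = 0 := by
    linarith [sq_nonneg (α * γ - 4 * m ^ 2), sq_nonneg (D * m)]
  exact eq_zero_of_pow_eq_zero hsq

theorem mul_eq_zero_of_conjugate_pair_coeffs_of_eq_neg_sq (hδ : δ = -m ^ 2)
    (h₆ : 6 * D = 2 * β - α ^ 2) (h₄ : D ^ 2 - 2 * m ^ 2 = β ^ 2 + 2 * δ - 2 * α * γ)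
    (h₂ : -(6 * D * m ^ 2) = 2 * β * δ - γ ^ 2) : D * m = 0 := by
  subst hδ
  have hsum : γ * γ + (m * α) * (m * α) = 0 := by linear_combination h₂ + m ^ 2 * h₆
  obtain ⟨hγ, hmα⟩ := mul_self_add_mul_self_eq_zero.mp hsum
  have hβ : 2 * β = α ^ 2 + 6 * D := by linear_combination -h₆
  have hsq : 32 * (D * m) ^ 2 = 0 := by
    linear_combination -4 * m ^ 2 * h₄ - m ^ 2 * (2 * β + α ^ 2 + 6 * D) * hβ
      + 8 * m ^ 2 * α * hγ - m * α * (α ^ 2 + 12 * D) * hmα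
  exact eq_zero_of_pow_eq_zero ((mul_eq_zero_iff_left (by norm_num)).mp hsq)

theorem mul_eq_zero_of_evenMonicOctic_eq_conjugate_pair
    (h : evenMonicOctic (6 * D) (D ^ 2 - 2 * m ^ 2) (-(6 * D * m ^ 2)) (m ^ 4) =
      (X ^ 4 + C α * X ^ 3 + C β * X ^ 2 + C γ * X + C δ) *
        ((X ^ 4 + C α * X ^ 3 + C β * X ^ 2 + C γ * X + C δ).comp (-X))) :
    D * m = 0 := by
  rw [monicQuartic_mul_comp_neg_X, evenMonicOctic_inj] at h
  obtain ⟨h₆, h₄, h₂, h₀⟩ := h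
  have hδsq : δ ^ 2 = (m ^ 2) ^ 2 := by linear_combination -h₀
  obtain hδ | hδ := sq_eq_sq_iff_eq_or_eq_neg.mp hδsq
  · exact mul_eq_zero_of_conjugate_pair_coeffs_of_eq_sq hδ h₆ h₄ h₂
  · exact mul_eq_zero_of_conjugate_pair_coeffs_of_eq_neg_sq hδ h₆ h₄ h₂

end OrderedRing

theorem cuboidPoly_no_conjugate_pair_factorization_general
    {R : Type*} [CommRing R] [LinearOrder R] [IsStrictOrderedRing R]
    {a u : ℤ} (ha : a ≠ 0) (hu : u ≠ 0) (hne : a ^ 2 ≠ u ^ 2) :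
    ¬ ∃ α β γ δ : R,
      (cuboidPoly a u).map (Int.castRingHom R) =
        (X ^ 4 + C α * X ^ 3 + C β * X ^ 2 + C γ * X + C δ) *
          ((X ^ 4 + C α * X ^ 3 + C β * X ^ 2 + C γ * X + C δ).comp (-X)) := by
  rintro ⟨α, β, γ, δ, h⟩
  rw [map_cuboidPoly] at h
  have hcast : ((u : R) ^ 2 - a ^ 2) * (a * u) = 0 :=
    mul_eq_zero_of_evenMonicOctic_eq_conjugate_pair h
  have hzero : (u ^ 2 - a ^ 2) * (a * u) = 0 := mod_cast hcast
  exact mul_ne_zero (sub_ne_zero.mpr hne.symm) (mul_ne_zero ha hu) hzero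

theorem cuboidPoly_no_conjugate_pair_factorization (a u : ℤ) (ha : 0 < a) (hu : 0 < u)
    (hco : IsCoprime a u) (hne : a ≠ u) :
    ¬ ∃ α β γ δ : ℤ,
      cuboidPoly a u =
        (X ^ 4 + C α * X ^ 3 + C β * X ^ 2 + C γ * X + C δ) *
          ((X ^ 4 + C α * X ^ 3 + C β * X ^ 2 + C γ * X + C δ).comp (-X)) := by
  have hsq : a ^ 2 ≠ u ^ 2 := (pow_left_inj₀ ha.le hu.le two_ne_zero).not.mpr hne
  simpa using cuboidPoly_no_conjugate_pair_factorization_general (R := ℤ) ha.ne' hu.ne' hsq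
end

section
/- If P_{a,u}(t) factors in ℤ[t] as a product of two monic polynomials of degree 4, then there exists an integer X satisfying the equation (⋆): (X² − 8Δ²)(X² − 9Δ²) = 4a²u²X². -/
open Polynomial

/-!
Put `m = a u`; the equation is trivial to solve when `Δ = 0` or `m = 0`. Otherwise the cuboid
polynomial is `Q(t²)`, where `Q(z) = (z² + 3Δz - m²)² - 2 (2Δz)²` has no root in the fraction field
because `2` is not a square. Split the factors into even and odd parts, `F = E(t²) + t O(t²)` and
`G = E'(t²) + t O'(t²)`. Since `F G` is even, `E O' + E' O = 0` with `E, E'` monic quadratic and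
`O, O'` of degree at most one, so one of three things happens:

* `O = O' = 0`. Then `Q = E E'`, and comparing coefficients shows that
  `Y = q - 3Δ`, with `q` the linear coefficient of `E`, solves the equation.
* `E = E'` and `O' = -O`, so that `Q = E² - z O²`. This is impossible because neither `-1` nor `-2`
  is a square.
* `E` and `O` have a common root. It is a root of `Q`, which is impossible.
-/

theorem two_ne_zero_of_not_isSquare_two {R : Type*} [Semiring R] (h : ¬IsSquare (2 : R)) :
    (2 : R) ≠ 0 :=
  fun h0 ↦ h (h0 ▸ IsSquare.zero)

section IntegrallyClosed

variable {R : Type*} [CommRing R] [IsDomain R] [IsIntegrallyClosed R] {Δ m x y : R}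

theorem eq_zero_of_sq_eq_mul_sq {d : R} (hd : ¬IsSquare d) (h : x ^ 2 = d * y ^ 2) : y = 0 := by
  by_contra hy
  obtain ⟨k, rfl⟩ : y ∣ x :=
    (IsIntegrallyClosed.pow_dvd_pow_iff two_ne_zero).1 ⟨d, by rw [h, mul_comm]⟩
  refine hd ⟨k, mul_left_cancel₀ (pow_ne_zero 2 hy) ?_⟩
  linear_combination -h

theorem eq_zero_of_sq_eq_eight_mul_sq (htwo : ¬IsSquare (2 : R)) (h : x ^ 2 = 8 * y ^ 2) :
    y = 0 := by
  have h2y : 2 * y = 0 := eq_zero_of_sq_eq_mul_sq htwo (x := x) (by linear_combination h)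
  exact (mul_eq_zero.1 h2y).resolve_left (two_ne_zero_of_not_isSquare_two htwo)

-- The hypothesis is `Q(x / y) = 0` cleared of denominators.
theorem denom_eq_zero_of_quartic_root (htwo : ¬IsSquare (2 : R)) (hΔ : Δ ≠ 0) (hm : m ≠ 0)
    (h : (x ^ 2 + 3 * Δ * x * y - m ^ 2 * y ^ 2) ^ 2 = 8 * (Δ * x * y) ^ 2) : y = 0 := by
  by_contra hy
  have hΔxy : Δ * x * y = 0 := eq_zero_of_sq_eq_eight_mul_sq htwo h
  obtain rfl : x = 0 := by simpa [hΔ, hy] using hΔxy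
  simp [hm, hy] at h

end IntegrallyClosed

/-- The cuboid polynomial with `Δ` and `m = a u` as independent parameters in any commutative ring,
with the square completed. -/
noncomputable def cuboidOctic {R : Type*} [CommRing R] (Δ m : R) : R[X] :=
  (X ^ 4 + C (3 * Δ) * X ^ 2 - C (m ^ 2)) ^ 2 - C (8 * Δ ^ 2) * X ^ 4

/-- The coefficients of `cuboidOctic Δ m` in degrees `7, …, 0` are those of the product
`(X⁴ + pX³ + qX² + rX + s) (X⁴ + p'X³ + q'X² + r'X + s')`: a factorization into two monic quartics,
recorded as a system of equations in `R`. -/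
structure CuboidFactorization {R : Type*} [CommRing R] (Δ m p q r s p' q' r' s' : R) : Prop where
  coeff_seven : p + p' = 0
  coeff_six : q + q' + p * p' = 6 * Δ
  coeff_five : r + r' + p * q' + q * p' = 0
  coeff_four : s + s' + p * r' + r * p' + q * q' = Δ ^ 2 - 2 * m ^ 2
  coeff_three : p * s' + p' * s + q * r' + r * q' = 0
  coeff_two : q * s' + q' * s + r * r' = -(6 * Δ * m ^ 2)
  coeff_one : r * s' + r' * s = 0
  coeff_zero : s * s' = m ^ 4

section Coefficients

variable {R : Type*} [CommRing R] (Δ m : R)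

theorem cuboidOctic_eq :
    cuboidOctic Δ m = X ^ 8 + C (6 * Δ) * X ^ 6 + C (Δ ^ 2 - 2 * m ^ 2) * X ^ 4
      + C (-(6 * Δ * m ^ 2)) * X ^ 2 + C (m ^ 4) := by
  simp only [cuboidOctic, map_sub, map_mul, map_neg, map_pow, map_ofNat]
  ring

theorem cuboidPoly_eq_cuboidOctic (a u : ℤ) :
    cuboidPoly a u = cuboidOctic (u ^ 2 - a ^ 2) (a * u) := by
  rw [cuboidPoly, cuboidOctic_eq]
  congr! 3 <;> ring_nf

theorem coeff_cuboidOctic (n : ℕ) :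
    (cuboidOctic Δ m).coeff n = match n with
      | 0 => m ^ 4
      | 2 => -(6 * Δ * m ^ 2)
      | 4 => Δ ^ 2 - 2 * m ^ 2
      | 6 => 6 * Δ
      | 8 => 1
      | _ => 0 := by
  simp only [cuboidOctic_eq, coeff_add, coeff_C_mul, coeff_X_pow, coeff_C]
  grind

theorem isMonicOfDegree_cuboidOctic [Nontrivial R] : IsMonicOfDegree (cuboidOctic Δ m) 8 := by
  refine (isMonicOfDegree_iff _ _).2 ⟨?_, coeff_cuboidOctic Δ m 8⟩
  rw [cuboidOctic_eq]
  compute_degree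

variable {Δ m}

theorem cuboidFactorization_coeff_of_mul_eq {F G : R[X]} (hF : IsMonicOfDegree F 4)
    (hG : IsMonicOfDegree G 4) (h : F * G = cuboidOctic Δ m) :
    CuboidFactorization Δ m (F.coeff 3) (F.coeff 2) (F.coeff 1) (F.coeff 0)
      (G.coeff 3) (G.coeff 2) (G.coeff 1) (G.coeff 0) := by
  have coeff_four {f : R[X]} (hf : IsMonicOfDegree f 4) : f.coeff 4 = 1 :=
    hf.natDegree_eq ▸ hf.monic.coeff_natDegree
  have coeff_of_four_lt {f : R[X]} (hf : IsMonicOfDegree f 4) {n : ℕ} (hn : 4 < n) :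
      f.coeff n = 0 :=
    coeff_eq_zero_of_natDegree_lt (hf.natDegree_eq ▸ hn)
  have coeff_mul_eq (n : ℕ) := congrArg (coeff · n) h
  have c₀ := coeff_mul_eq 0
  have c₁ := coeff_mul_eq 1
  have c₂ := coeff_mul_eq 2
  have c₃ := coeff_mul_eq 3
  have c₄ := coeff_mul_eq 4
  have c₅ := coeff_mul_eq 5
  have c₆ := coeff_mul_eq 6
  have c₇ := coeff_mul_eq 7
  simp only [coeff_cuboidOctic, coeff_mul, Finset.Nat.sum_antidiagonal_eq_sum_range_succ_mk,
    Finset.sum_range_succ, Finset.sum_range_zero, Nat.reduceSub, Nat.reduceLT, coeff_four hF,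
    coeff_four hG, coeff_of_four_lt hF, coeff_of_four_lt hG] at c₀ c₁ c₂ c₃ c₄ c₅ c₆ c₇
  constructor
  · linear_combination c₇
  · linear_combination c₆
  · linear_combination c₅
  · linear_combination c₄
  · linear_combination c₃
  · linear_combination c₂
  · linear_combination c₁
  · linear_combination c₀

end Coefficients

namespace CuboidFactorization

section Domain

variable {R : Type*} [CommRing R] [IsDomain R] {p' q' r' s' Δ m p q r s : R}

/-- The last alternative says that `-r / p` is a common root of the even and odd parts
`z² + qz + s` and `pz + r` of the first factor. -/
theorem even_or_symm_or_common_root (H : CuboidFactorization Δ m p q r s p' q' r' s') :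
    (p = 0 ∧ r = 0) ∨ (q = q' ∧ r' = -r ∧ s = s') ∨
      (p ≠ 0 ∧ r ^ 2 - q * r * p + s * p ^ 2 = 0) := by
  obtain rfl : p' = -p := by linear_combination H.coeff_seven
  obtain rfl : r' = p * (q - q') - r := by linear_combination H.coeff_five
  obtain rfl | hq := eq_or_ne q q'
  · have hp : p * (s - s') = 0 := by linear_combination -H.coeff_three
    have hr : r * (s - s') = 0 := by linear_combination -H.coeff_one
    obtain hs | hs := eq_or_ne s s'
    · exact .inr (.inl ⟨rfl, by ring, hs⟩)
    · exact .inl ⟨(mul_eq_zero.1 hp).resolve_right (sub_ne_zero.2 hs),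
        (mul_eq_zero.1 hr).resolve_right (sub_ne_zero.2 hs)⟩
  · replace hq : q - q' ≠ 0 := sub_ne_zero.2 hq
    have hr : (q - q') * r = p * ((q - q') * q - (s - s')) := by
      linear_combination -H.coeff_three
    obtain rfl | hp := eq_or_ne p 0
    · refine .inl ⟨rfl, (mul_eq_zero.1 ?_).resolve_left hq⟩
      linear_combination hr
    have hs : (q - q') ^ 2 * s = q * (s - s') * (q - q') - (s - s') ^ 2 := by
      apply mul_left_cancel₀ hp
      linear_combination (q - q') * H.coeff_one + (s - s') * hr
    refine .inr (.inr ⟨hp, mul_left_cancel₀ (pow_ne_zero 2 hq) ?_⟩)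
    linear_combination ((q - q') * r - p * (s - s')) * hr + p ^ 2 * hs

end Domain

section IntegrallyClosed

variable {R : Type*} [CommRing R] [IsDomain R] [IsIntegrallyClosed R]
  {p' q' r' s' Δ m p q r s : R}

theorem star_of_even (htwo : ¬IsSquare (2 : R)) (hΔ : Δ ≠ 0)
    (H : CuboidFactorization Δ m 0 q 0 s p' q' r' s') :
    ((q - 3 * Δ) ^ 2 - 8 * Δ ^ 2) * ((q - 3 * Δ) ^ 2 - 9 * Δ ^ 2) =
      4 * m ^ 2 * (q - 3 * Δ) ^ 2 := by
  obtain ⟨Y, rfl⟩ : ∃ Y, q = Y + 3 * Δ := ⟨q - 3 * Δ, by ring⟩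
  obtain rfl : q' = 3 * Δ - Y := by linear_combination H.coeff_six
  rw [add_sub_cancel_right]
  have hsum : s + s' = Y ^ 2 - 8 * Δ ^ 2 - 2 * m ^ 2 := by linear_combination H.coeff_four
  have hdiff : Y * (s - s') = 3 * Δ * (Y ^ 2 - 8 * Δ ^ 2) := by
    linear_combination 3 * Δ * hsum - H.coeff_two
  have hY : Y ^ 2 - 8 * Δ ^ 2 ≠ 0 := fun h ↦ hΔ <|
    eq_zero_of_sq_eq_eight_mul_sq htwo (sub_eq_zero.1 h)
  apply mul_left_cancel₀ hY
  -- Substitute `hsum` and `hdiff` into `Y² (s + s')² - (Y (s - s'))² = 4 Y² s s'`.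
  linear_combination (-Y ^ 2) * (s + s' + (Y ^ 2 - 8 * Δ ^ 2 - 2 * m ^ 2)) * hsum
    + (Y * (s - s') + 3 * Δ * (Y ^ 2 - 8 * Δ ^ 2)) * hdiff + 4 * Y ^ 2 * H.coeff_zero

theorem not_common_root (htwo : ¬IsSquare (2 : R)) (hΔ : Δ ≠ 0) (hm : m ≠ 0)
    (H : CuboidFactorization Δ m p q r s p' q' r' s') (hp : p ≠ 0) :
    r ^ 2 - q * r * p + s * p ^ 2 ≠ 0 := by
  obtain rfl : p' = -p := by linear_combination H.coeff_seven
  intro hroot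
  refine hp (denom_eq_zero_of_quartic_root (x := -r) htwo hΔ hm ?_)
  linear_combination (r ^ 2 - q' * r * p + s' * p ^ 2) * hroot + r ^ 3 * p * H.coeff_six
    - r ^ 2 * p ^ 2 * H.coeff_four + r * p ^ 3 * H.coeff_two - p ^ 4 * H.coeff_zero

theorem not_symm_of_const_eq_sq (htwo : (2 : R) ≠ 0) (hneg_two : ¬IsSquare (-2 : R))
    (hΔ : Δ ≠ 0) (hm : m ≠ 0) :
    ¬CuboidFactorization Δ m p q r (m ^ 2) (-p) q (-r) (m ^ 2) := by
  intro H
  have hr : r ^ 2 = m ^ 2 * (p ^ 2 + 12 * Δ) := by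
    linear_combination m ^ 2 * H.coeff_six - H.coeff_two
  have hsq : (4 * m ^ 2 - p * r) ^ 2 = -2 * (2 ^ 2 * (Δ * m)) ^ 2 := by
    linear_combination 4 * m ^ 2 * H.coeff_four + p ^ 2 * hr
      - m ^ 2 * (2 * q + p ^ 2 + 6 * Δ) * H.coeff_six
  simpa [htwo, hΔ, hm] using eq_zero_of_sq_eq_mul_sq hneg_two hsq

theorem not_symm_of_const_eq_neg_sq (htwo : (2 : R) ≠ 0) (hneg_one : ¬IsSquare (-1 : R))
    (hΔ : Δ ≠ 0) (hm : m ≠ 0) :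
    ¬CuboidFactorization Δ m p q r (-m ^ 2) (-p) q (-r) (-m ^ 2) := by
  intro H
  have hsq : r ^ 2 = -1 * (m * p) ^ 2 := by
    linear_combination -H.coeff_two - m ^ 2 * H.coeff_six
  obtain rfl : p = 0 := by simpa [hm] using eq_zero_of_sq_eq_mul_sq hneg_one hsq
  have hq : 2 * q = 2 * (3 * Δ) := by linear_combination H.coeff_six
  obtain rfl : q = 3 * Δ := mul_left_cancel₀ htwo hq
  have hΔ_sq : 2 ^ 3 * Δ ^ 2 = 0 := by linear_combination H.coeff_four
  simp [htwo, hΔ] at hΔ_sq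

theorem not_symm (hneg_one : ¬IsSquare (-1 : R)) (htwo : (2 : R) ≠ 0)
    (hneg_two : ¬IsSquare (-2 : R)) (hΔ : Δ ≠ 0) (hm : m ≠ 0) :
    ¬CuboidFactorization Δ m p q r s p' q (-r) s := by
  intro H
  obtain rfl : p' = -p := by linear_combination H.coeff_seven
  have hs : s ^ 2 = (m ^ 2) ^ 2 := by linear_combination H.coeff_zero
  obtain rfl | rfl := sq_eq_sq_iff_eq_or_eq_neg.1 hs
  · exact not_symm_of_const_eq_sq htwo hneg_two hΔ hm H
  · exact not_symm_of_const_eq_neg_sq htwo hneg_one hΔ hm H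

end IntegrallyClosed

end CuboidFactorization

theorem cuboidPoly_4_4_factorization_implies_star_general {R : Type*} [CommRing R] [IsDomain R]
    [IsIntegrallyClosed R] (hneg_one : ¬IsSquare (-1 : R)) (htwo : ¬IsSquare (2 : R))
    (hneg_two : ¬IsSquare (-2 : R)) {Δ m : R} {F : R[X]} (hF : IsMonicOfDegree F 4)
    (hdvd : F ∣ cuboidOctic Δ m) :
    ∃ Y : R, (Y ^ 2 - 8 * Δ ^ 2) * (Y ^ 2 - 9 * Δ ^ 2) = 4 * m ^ 2 * Y ^ 2 := by
  obtain rfl | hΔ := eq_or_ne Δ 0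
  · exact ⟨0, by ring⟩
  obtain rfl | hm := eq_or_ne m 0
  · exact ⟨3 * Δ, by ring⟩
  obtain ⟨G, hFG⟩ := hdvd
  have hG : IsMonicOfDegree G 4 := hF.of_mul_left (hFG ▸ isMonicOfDegree_cuboidOctic Δ m)
  have H := cuboidFactorization_coeff_of_mul_eq hF hG hFG.symm
  obtain ⟨hp, hr⟩ | ⟨hq, hr, hs⟩ | ⟨hp, hroot⟩ := H.even_or_symm_or_common_root
  · rw [hp, hr] at H
    exact ⟨F.coeff 2 - 3 * Δ, H.star_of_even htwo hΔ⟩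
  · rw [← hq, hr, ← hs] at H
    exact (H.not_symm hneg_one (two_ne_zero_of_not_isSquare_two htwo) hneg_two hΔ hm).elim
  · exact (H.not_common_root htwo hΔ hm hp hroot).elim

theorem cuboidPoly_4_4_factorization_implies_star (a u : ℤ) (ha : 0 < a) (hu : 0 < u)
    (hco : IsCoprime a u) (hne : a ≠ u)
    (h : ∃ F G : Polynomial ℤ, F.Monic ∧ G.Monic ∧ F.degree = 4 ∧ G.degree = 4 ∧
      cuboidPoly a u = F * G) :
    ∃ Y : ℤ, (Y ^ 2 - 8 * (u ^ 2 - a ^ 2) ^ 2) * (Y ^ 2 - 9 * (u ^ 2 - a ^ 2) ^ 2) =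
      4 * a ^ 2 * u ^ 2 * Y ^ 2 := by
  obtain ⟨F, G, hF, -, hdeg, -, hFG⟩ := h
  have hdvd : F ∣ cuboidOctic (u ^ 2 - a ^ 2) (a * u) :=
    ⟨G, by rw [← cuboidPoly_eq_cuboidOctic, hFG]⟩
  simpa only [mul_pow, ← mul_assoc] using
    cuboidPoly_4_4_factorization_implies_star_general (by decide)
      Int.prime_two.irreducible.not_isSquare (by decide)
      ⟨natDegree_eq_of_degree_eq_some hdeg, hF⟩ hdvd
end

section
/- Let a, u be coprime positive integers with a ≠ u, Δ = u² − a², and suppose 3 divides au. Then there is no integer X satisfying (X² − 8Δ²)(X² − 9Δ²) = 4a²u²X². -/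
/-!
Put `t = X / Δ`. Then `(t ^ 2 - 8) * (t ^ 2 - 9)` is a rational square, and writing `t = x / d` in
lowest terms the coprime factors `x ^ 2 - 8 * d ^ 2` and `x ^ 2 - 9 * d ^ 2` are, by a congruence
modulo `3`, both squares. With `x ^ 2 - 9 * d ^ 2 = r ^ 2` the numbers `r ^ 2 + d ^ 2` and
`r ^ 2 + 9 * d ^ 2` are squares, and Fermat descent shows that this forces `r = 0` or `d = 0`.

One round of the descent composes two dual 2-isogenies. If `n ^ 2 + r ^ 2` and `n ^ 2 + 9 * r ^ 2`
are squares, their difference `8 * r ^ 2` factors and yields `r = 2 * a * b` with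
`b ^ 2 - 4 * a ^ 2` and `b ^ 2 - 16 * a ^ 2` squares; the difference `12 * a ^ 2` of these factors
in turn and yields `a = r' * n'` with `n' ^ 2 + r' ^ 2` and `n' ^ 2 + 9 * r' ^ 2` squares.
-/

theorem isSquare_of_isCoprime_of_isSquare_mul {x y : ℤ} (hxy : IsCoprime x y) (hx : 0 ≤ x)
    (h : IsSquare (x * y)) : IsSquare x := by
  obtain ⟨c, hc⟩ := isSquare_iff_exists_sq _ |>.mp h
  obtain ⟨a, rfl | rfl⟩ := Int.sq_of_isCoprime hxy hc
  · exact IsSquare.sq a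
  · obtain rfl : a = 0 := by nlinarith
    exact ⟨0, rfl⟩

theorem three_dvd_and_three_dvd_of_three_dvd_sq_add_sq {x y : ℤ} (h : 3 ∣ x ^ 2 + y ^ 2) :
    3 ∣ x ∧ 3 ∣ y := by
  have key : ∀ i j : ZMod 3, i ^ 2 + j ^ 2 = 0 → i = 0 ∧ j = 0 := by decide
  have hdvd (k : ℤ) : (k : ZMod 3) = 0 ↔ 3 ∣ k := ZMod.intCast_zmod_eq_zero_iff_dvd k 3
  rw [← hdvd] at h
  simp only [← hdvd]
  exact key x y (mod_cast h)

theorem exists_sq_eq_of_isCoprime_of_mul_eq_sq {x y c : ℤ} (hxy : IsCoprime x y) (hc : c ≠ 0)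
    (h : x * y = c ^ 2) :
    ∃ a b, c = a * b ∧ (x = a ^ 2 ∧ y = b ^ 2 ∨ x = -a ^ 2 ∧ y = -b ^ 2) := by
  obtain ⟨a, ha⟩ := Int.sq_of_isCoprime hxy h
  obtain ⟨b, hb⟩ := Int.sq_of_isCoprime hxy.symm ((mul_comm y x).trans h)
  have hsigns : x = a ^ 2 ∧ y = b ^ 2 ∨ x = -a ^ 2 ∧ y = -b ^ 2 := by
    have hc_pos : 0 < c ^ 2 := by positivity
    rcases ha with rfl | rfl <;> rcases hb with rfl | rfl
    · exact .inl ⟨rfl, rfl⟩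
    · nlinarith [sq_nonneg (a * b)]
    · nlinarith [sq_nonneg (a * b)]
    · exact .inr ⟨rfl, rfl⟩
  have hab : c ^ 2 = (a * b) ^ 2 := by
    rcases hsigns with ⟨rfl, rfl⟩ | ⟨rfl, rfl⟩ <;> linear_combination -h
  rcases sq_eq_sq_iff_eq_or_eq_neg.mp hab with hc | hc
  · exact ⟨a, b, hc, hsigns⟩
  · exact ⟨-a, b, by rw [hc, neg_mul], by rwa [neg_sq]⟩

theorem exists_of_isCoprime_of_mul_eq_prime_mul_sq {p s t c : ℤ} (hp : Prime p)
    (hst : IsCoprime s t) (hc : c ≠ 0) (h : s * t = p * c ^ 2) :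
    ∃ a b, c = a * b ∧ IsCoprime (p * a) b ∧
      (s - t) ^ 2 = (p * a ^ 2 - b ^ 2) ^ 2 ∧ (s + t) ^ 2 = (p * a ^ 2 + b ^ 2) ^ 2 := by
  wlog hps : p ∣ s generalizing s t
  · have hpt : p ∣ t := (hp.dvd_or_dvd (Dvd.intro _ h.symm)).resolve_left hps
    simpa only [sub_sq_comm t s, add_comm t s] using this hst.symm ((mul_comm t s).trans h) hpt
  obtain ⟨s, rfl⟩ := hps
  have hprod : s * t = c ^ 2 := mul_left_cancel₀ hp.ne_zero (by rw [← h, mul_assoc])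
  obtain ⟨a, b, rfl, hab⟩ :=
    exists_sq_eq_of_isCoprime_of_mul_eq_sq hst.of_mul_left_right hc hprod
  refine ⟨a, b, rfl, ?_⟩
  rcases hab with ⟨rfl, rfl⟩ | ⟨rfl, rfl⟩
  · exact ⟨(hst.of_isCoprime_of_dvd_left ⟨a, by ring⟩).of_isCoprime_of_dvd_right ⟨b, by ring⟩,
      rfl, rfl⟩
  · exact ⟨(hst.of_isCoprime_of_dvd_left ⟨-a, by ring⟩).of_isCoprime_of_dvd_right ⟨-b, by ring⟩,
      by ring, by ring⟩

theorem exists_of_sq_sub_sq_eq_four_mul_prime_mul_sq {p x y c : ℤ} (hp : Prime p)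
    (hxy : IsCoprime x y) (hc : c ≠ 0) (h : y ^ 2 - x ^ 2 = 4 * p * c ^ 2) :
    ∃ a b, c = a * b ∧ IsCoprime (p * a) b ∧
      x ^ 2 = (p * a ^ 2 - b ^ 2) ^ 2 ∧ y ^ 2 = (p * a ^ 2 + b ^ 2) ^ 2 := by
  obtain ⟨s, hs⟩ : Even (y - x) := by
    have : Even (y ^ 2 - x ^ 2) := ⟨2 * p * c ^ 2, by rw [h]; ring⟩
    simpa [Int.even_sub, Int.even_pow] using this
  obtain rfl : y = s + (s + x) := by linarith
  have hcop : IsCoprime s (s + x) := by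
    obtain ⟨u, v, huv⟩ := hxy
    exact ⟨v - u, u + v, by linear_combination huv⟩
  obtain ⟨a, b, hab, hpab, hsub, hadd⟩ :=
    exists_of_isCoprime_of_mul_eq_prime_mul_sq hp hcop hc (by linarith)
  exact ⟨a, b, hab, hpab, by rw [← hsub]; ring, hadd⟩

theorem isCoprime_of_sq_add_sq_of_sq_add_nine_mul_sq {n r m q : ℤ} (hnr : IsCoprime n r)
    (hm : n ^ 2 + r ^ 2 = m ^ 2) (hq : n ^ 2 + 9 * r ^ 2 = q ^ 2) : IsCoprime m q := by
  have hm_odd : Odd m := by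
    have htriple : PythagoreanTriple n r m := by simpa only [PythagoreanTriple, ← sq] using hm
    rw [← Int.odd_pow' two_ne_zero, ← hm]
    rcases htriple.even_odd_of_coprime (Int.isCoprime_iff_gcd_eq_one.mp hnr)
      with ⟨hn, hr⟩ | ⟨hn, hr⟩
    · exact ((Int.even_iff.mpr hn).pow_of_ne_zero two_ne_zero).add_odd (Int.odd_iff.mpr hr).pow
    · exact (Int.odd_iff.mpr hn).pow.add_even ((Int.even_iff.mpr hr).pow_of_ne_zero two_ne_zero)
  have hm_r : IsCoprime (m ^ 2) (r ^ 2) := by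
    have := (hnr.pow (m := 2) (n := 2)).add_mul_left_left 1
    rwa [mul_one, hm] at this
  have hm_eight : IsCoprime (m ^ 2) (2 ^ 3) := (Int.isCoprime_two_right.mpr hm_odd).pow
  have hm_q : IsCoprime (m ^ 2) (q ^ 2) := by
    rw [show q ^ 2 = 2 ^ 3 * r ^ 2 + m ^ 2 * 1 by linarith, IsCoprime.add_mul_left_right_iff]
    exact hm_eight.mul_right hm_r
  exact (IsCoprime.pow_iff two_pos two_pos).mp hm_q

theorem even_and_isSquare_sq_sub_four_mul_sq_of_isSquare_or_neg {a b : ℤ} (hb : Odd b)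
    (h : IsSquare (b ^ 2 - 4 * a ^ 2) ∨ IsSquare (-(b ^ 2 - 4 * a ^ 2))) :
    Even a ∧ IsSquare (b ^ 2 - 4 * a ^ 2) := by
  have hb_sq := Int.eight_dvd_sq_sub_one_of_odd hb
  have hodd : Odd (b ^ 2 - 4 * a ^ 2) := hb.pow.sub_even ⟨2 * a ^ 2, by ring⟩
  rcases h with h | h <;> obtain ⟨w, hw⟩ := (isSquare_iff_exists_sq _).mp h
  · have hw_odd : Odd w := by rwa [hw, Int.odd_pow' two_ne_zero] at hodd
    have hw_sq := Int.eight_dvd_sq_sub_one_of_odd hw_odd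
    have ha_sq : Even (a ^ 2) := by rw [Int.even_iff]; omega
    exact ⟨(Int.even_pow' two_ne_zero).mp ha_sq, h⟩
  · have hw_odd : Odd w := by rwa [← odd_neg, hw, Int.odd_pow' two_ne_zero] at hodd
    have hw_sq := Int.eight_dvd_sq_sub_one_of_odd hw_odd
    omega

theorem exists_isSquare_sq_sub_of_isSquare_sq_add {n r : ℤ} (hnr : IsCoprime n r)
    (hn : ¬ 3 ∣ n) (hr : r ≠ 0) (h₁ : IsSquare (n ^ 2 + r ^ 2))
    (h₉ : IsSquare (n ^ 2 + 9 * r ^ 2)) :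
    ∃ a b, r = 2 * a * b ∧ IsCoprime (b ^ 2 - 4 * a ^ 2) (b ^ 2 - 16 * a ^ 2) ∧
      IsSquare (b ^ 2 - 4 * a ^ 2) ∧ IsSquare (b ^ 2 - 16 * a ^ 2) := by
  obtain ⟨m, hm⟩ := (isSquare_iff_exists_sq _).mp h₁
  obtain ⟨q, hq⟩ := (isSquare_iff_exists_sq _).mp h₉
  obtain ⟨a, b, rfl, hab, hma, -⟩ :=
    exists_of_sq_sub_sq_eq_four_mul_prime_mul_sq Int.prime_two
      (isCoprime_of_sq_add_sq_of_sq_add_nine_mul_sq hnr hm hq) hr (by linarith)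
  have hb_odd : Odd b := Int.isCoprime_two_left.mp hab.of_mul_left_left
  have hprod : (b ^ 2 - 4 * a ^ 2) * (b ^ 2 - a ^ 2) = n ^ 2 := by linear_combination -hma - hm
  have hcop : IsCoprime (b ^ 2 - 4 * a ^ 2) (b ^ 2 - a ^ 2) := by
    have h_three : IsCoprime 3 (b ^ 2 - a ^ 2) := by
      refine Int.prime_three.coprime_iff_not_dvd.mpr fun h ↦ hn ?_
      exact Int.prime_three.dvd_of_dvd_pow (hprod ▸ h.mul_left _)
    have h_sq : IsCoprime (a ^ 2) (b ^ 2 - a ^ 2) := by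
      rw [show b ^ 2 - a ^ 2 = b ^ 2 + a ^ 2 * -1 by ring, IsCoprime.add_mul_left_right_iff]
      exact hab.of_mul_left_right.pow
    rw [show b ^ 2 - 4 * a ^ 2 = -(3 * a ^ 2) + (b ^ 2 - a ^ 2) * 1 by ring,
      IsCoprime.add_mul_left_left_iff]
    exact (h_three.mul_left h_sq).neg_left
  obtain ⟨⟨a, rfl⟩, hw⟩ : Even a ∧ IsSquare (b ^ 2 - 4 * a ^ 2) := by
    apply even_and_isSquare_sq_sub_four_mul_sq_of_isSquare_or_neg hb_odd
    obtain ⟨w, hw | hw⟩ := Int.sq_of_isCoprime hcop hprod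
    · exact .inl ⟨w, by rw [hw, sq]⟩
    · exact .inr ⟨w, by rw [hw, neg_neg, sq]⟩
  have hz : IsSquare (b ^ 2 - (a + a) ^ 2) := by
    refine isSquare_of_isCoprime_of_isSquare_mul hcop.symm ?_ ⟨n, by rw [mul_comm, hprod, sq]⟩
    nlinarith [hw.nonneg, sq_nonneg (a + a)]
  rw [show 4 * (a + a) ^ 2 = 16 * a ^ 2 by ring] at hw hcop
  rw [show (a + a) ^ 2 = 4 * a ^ 2 by ring] at hz hcop
  exact ⟨a, b, by ring, hcop.symm, hz, hw⟩

theorem exists_isSquare_sq_add_of_isSquare_sq_sub {a b : ℤ} (ha : a ≠ 0)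
    (hcop : IsCoprime (b ^ 2 - 4 * a ^ 2) (b ^ 2 - 16 * a ^ 2))
    (h₄ : IsSquare (b ^ 2 - 4 * a ^ 2)) (h₁₆ : IsSquare (b ^ 2 - 16 * a ^ 2)) :
    ∃ n r, a = r * n ∧ IsCoprime n r ∧ ¬ 3 ∣ n ∧
      IsSquare (n ^ 2 + r ^ 2) ∧ IsSquare (n ^ 2 + 9 * r ^ 2) := by
  have hb_odd : Odd b := by
    rw [← Int.not_even_iff_odd]
    rintro ⟨k, rfl⟩
    exact Int.prime_two.not_isUnit <| hcop.isUnit_of_dvd'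
      ⟨2 * k ^ 2 - 2 * a ^ 2, by ring⟩ ⟨2 * k ^ 2 - 8 * a ^ 2, by ring⟩
  obtain ⟨z, hz⟩ := (isSquare_iff_exists_sq _).mp h₄
  obtain ⟨w, hw⟩ := (isSquare_iff_exists_sq _).mp h₁₆
  have hwz : IsCoprime w z := by
    rw [hz, hw] at hcop
    exact ((IsCoprime.pow_iff two_pos two_pos).mp hcop).symm
  obtain ⟨r, n, rfl, hrn, -, hzr⟩ :=
    exists_of_sq_sub_sq_eq_four_mul_prime_mul_sq Int.prime_three hwz ha (by linarith)
  have hprod : (n ^ 2 + r ^ 2) * (n ^ 2 + 9 * r ^ 2) = b ^ 2 := by linear_combination -hz - hzr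
  have hsum_odd : Odd (n ^ 2 + r ^ 2) := by
    have : Odd ((n ^ 2 + r ^ 2) * (n ^ 2 + 9 * r ^ 2)) := hprod ▸ hb_odd.pow
    exact (Int.odd_mul.mp this).1
  have hfactors : IsCoprime (n ^ 2 + r ^ 2) (n ^ 2 + 9 * r ^ 2) := by
    have h_eight : IsCoprime (n ^ 2 + r ^ 2) (2 ^ 3) :=
      (Int.isCoprime_two_right.mpr hsum_odd).pow_right
    have h_sq : IsCoprime (n ^ 2 + r ^ 2) (r ^ 2) := by
      simpa only [mul_one] using
        (hrn.of_mul_left_right.symm.pow (m := 2) (n := 2)).add_mul_left_left 1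
    rw [show n ^ 2 + 9 * r ^ 2 = 2 ^ 3 * r ^ 2 + (n ^ 2 + r ^ 2) * 1 by ring,
      IsCoprime.add_mul_left_right_iff]
    exact h_eight.mul_right h_sq
  refine ⟨n, r, rfl, hrn.of_mul_left_right.symm,
    Int.prime_three.coprime_iff_not_dvd.mp hrn.of_mul_left_left, ?_, ?_⟩
  · exact isSquare_of_isCoprime_of_isSquare_mul hfactors (by positivity) (hprod ▸ .sq b)
  · refine isSquare_of_isCoprime_of_isSquare_mul hfactors.symm (by positivity) ?_
    rw [mul_comm, hprod]
    exact .sq b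

theorem eq_zero_of_isSquare_sq_add_of_not_three_dvd {n r : ℤ} (hnr : IsCoprime n r) (hn : ¬ 3 ∣ n)
    (h₁ : IsSquare (n ^ 2 + r ^ 2)) (h₉ : IsSquare (n ^ 2 + 9 * r ^ 2)) : r = 0 := by
  induction hN : r.natAbs using Nat.strong_induction_on generalizing n r with
  | _ N ih =>
  by_contra hr
  obtain ⟨a, b, rfl, hcop, h₄, h₁₆⟩ :=
    exists_isSquare_sq_sub_of_isSquare_sq_add hnr hn hr h₁ h₉
  obtain ⟨n', r', rfl, hnr', hn', h₁', h₉'⟩ := exists_isSquare_sq_add_of_isSquare_sq_sub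
    (by rintro rfl; simp at hr) hcop h₄ h₁₆
  have hlt : r'.natAbs < N := by
    have hfactor : 2 * (r' * n') * b = r' * (2 * (n' * b)) := by ring
    rw [← hN, hfactor, Int.natAbs_mul]
    obtain ⟨hr', hnb⟩ := mul_ne_zero_iff.mp (hfactor ▸ hr)
    exact lt_mul_of_one_lt_right (Int.natAbs_pos.mpr hr') (by omega)
  exact hr (by rw [ih _ hlt hnr' hn' h₁' h₉' rfl]; ring)

theorem eq_zero_or_eq_zero_of_isSquare_sq_add {n r : ℤ} (hnr : IsCoprime n r)
    (h₁ : IsSquare (n ^ 2 + r ^ 2)) (h₉ : IsSquare (n ^ 2 + 9 * r ^ 2)) : n = 0 ∨ r = 0 := by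
  by_cases hn : 3 ∣ n
  swap
  · exact .inr (eq_zero_of_isSquare_sq_add_of_not_three_dvd hnr hn h₁ h₉)
  have hr : ¬ 3 ∣ r := fun hr ↦ Int.prime_three.not_isUnit (hnr.isUnit_of_dvd' hn hr)
  obtain ⟨n, rfl⟩ := hn
  -- The pair `(3 * n, r)` may be traded for `(r, n)`, whose first entry is prime to `3`.
  have hsq : IsSquare (r ^ 2 + n ^ 2) := by
    obtain ⟨q, hq⟩ := (isSquare_iff_exists_sq _).mp h₉
    obtain ⟨q, rfl⟩ : 3 ∣ q :=
      Int.prime_three.dvd_of_dvd_pow (n := 2) ⟨3 * (n ^ 2 + r ^ 2), by linarith⟩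
    exact ⟨q, by linarith⟩
  have hn_zero : n = 0 :=
    eq_zero_of_isSquare_sq_add_of_not_three_dvd hnr.of_mul_left_right.symm hr hsq
      (by convert h₁ using 1; ring)
  exact .inl (by rw [hn_zero, mul_zero])

theorem isCoprime_sq_sub_eight_mul_sq_sq_sub_nine_mul_sq {R : Type*} [CommRing R] {x d : R}
    (hxd : IsCoprime x d) : IsCoprime (x ^ 2 - 8 * d ^ 2) (x ^ 2 - 9 * d ^ 2) := by
  obtain ⟨u, v, huv⟩ := hxd.pow (m := 2) (n := 2)
  exact ⟨9 * u + v, -8 * u - v, by linear_combination huv⟩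

theorem sq_sub_eight_mul_sq_pos_of_isSquare {x d : ℤ} (hxd : IsCoprime x d)
    (h : IsSquare ((x ^ 2 - 8 * d ^ 2) * (x ^ 2 - 9 * d ^ 2))) : 0 < x ^ 2 - 8 * d ^ 2 := by
  have hcop := isCoprime_sq_sub_eight_mul_sq_sq_sub_nine_mul_sq hxd
  by_contra! hle
  rw [← neg_mul_neg] at h
  obtain ⟨q, hq⟩ := (isSquare_iff_exists_sq _).mp <|
    isSquare_of_isCoprime_of_isSquare_mul hcop.neg_neg (by linarith) h
  obtain ⟨r, hr⟩ := (isSquare_iff_exists_sq _).mp <|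
    isSquare_of_isCoprime_of_isSquare_mul hcop.neg_neg.symm (by nlinarith [sq_nonneg d])
      ((mul_comm _ _).subst h)
  obtain ⟨x, rfl⟩ : 3 ∣ x := (three_dvd_and_three_dvd_of_three_dvd_sq_add_sq (y := r)
    ⟨3 * d ^ 2, by linarith⟩).1
  have hd : 3 ∣ d := (three_dvd_and_three_dvd_of_three_dvd_sq_add_sq (y := q)
    ⟨3 * d ^ 2 - 3 * x ^ 2, by linarith⟩).1
  exact Int.prime_three.not_isUnit (hxd.isUnit_of_dvd' (dvd_mul_right 3 x) hd)

theorem sq_eq_nine_mul_sq_of_isSquare {x d : ℤ} (hxd : IsCoprime x d) (hd : d ≠ 0)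
    (h : IsSquare ((x ^ 2 - 8 * d ^ 2) * (x ^ 2 - 9 * d ^ 2))) : x ^ 2 = 9 * d ^ 2 := by
  have hcop := isCoprime_sq_sub_eight_mul_sq_sq_sub_nine_mul_sq hxd
  have hpos := sq_sub_eight_mul_sq_pos_of_isSquare hxd h
  obtain ⟨r, hr⟩ := (isSquare_iff_exists_sq _).mp <|
    isSquare_of_isCoprime_of_isSquare_mul hcop.symm (nonneg_of_mul_nonneg_right h.nonneg hpos)
      ((mul_comm _ _).subst h)
  have hrd : IsCoprime r d := by
    rw [← IsCoprime.pow_iff two_pos two_pos, ← hr,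
      show x ^ 2 - 9 * d ^ 2 = x ^ 2 + d ^ 2 * -9 by ring, IsCoprime.add_mul_left_left_iff]
    exact hxd.pow
  have h₁ : IsSquare (r ^ 2 + d ^ 2) := by
    convert isSquare_of_isCoprime_of_isSquare_mul hcop hpos.le h using 1
    linarith
  have h₉ : IsSquare (r ^ 2 + 9 * d ^ 2) := ⟨x, by linarith⟩
  obtain rfl := (eq_zero_or_eq_zero_of_isSquare_sq_add hrd h₁ h₉).resolve_right hd
  linarith

theorem sq_eq_nine_of_isSquare {t : ℚ} (h : IsSquare ((t ^ 2 - 8) * (t ^ 2 - 9))) :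
    t ^ 2 = 9 := by
  have ht : t = t.num / t.den := t.num_div_den.symm
  have hden : (t.den : ℚ) ≠ 0 := mod_cast t.den_ne_zero
  have hsq : IsSquare ((t.num ^ 2 - 8 * (t.den : ℤ) ^ 2) * (t.num ^ 2 - 9 * (t.den : ℤ) ^ 2)) := by
    rw [← Rat.isSquare_intCast_iff]
    obtain ⟨w, hw⟩ := h
    refine ⟨w * t.den ^ 2, ?_⟩
    rw [ht] at hw
    field_simp at hw
    push_cast
    linear_combination hw
  have hnum : t.num ^ 2 = 9 * (t.den : ℤ) ^ 2 :=
    sq_eq_nine_mul_sq_of_isSquare (Rat.isCoprime_num_den t) (mod_cast t.den_ne_zero) hsq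
  rw [ht, div_pow, div_eq_iff (pow_ne_zero 2 hden)]
  exact_mod_cast hnum

theorem star_no_solution_of_three_dvd_au_general (a u Δ : ℚ) (ha : a ≠ 0) (hu : u ≠ 0)
    (hΔ : Δ ≠ 0) :
    ¬ ∃ X : ℚ, (X ^ 2 - 8 * Δ ^ 2) * (X ^ 2 - 9 * Δ ^ 2) = 4 * a ^ 2 * u ^ 2 * X ^ 2 := by
  rintro ⟨X, hX⟩
  have hsq : IsSquare (((X / Δ) ^ 2 - 8) * ((X / Δ) ^ 2 - 9)) :=
    ⟨2 * a * u * X / Δ ^ 2, by field_simp; linear_combination hX⟩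
  have hX_sq : X ^ 2 = 9 * Δ ^ 2 := by
    have hquot : X ^ 2 / Δ ^ 2 = 9 := by rw [← div_pow, sq_eq_nine_of_isSquare hsq]
    exact (div_eq_iff (pow_ne_zero 2 hΔ)).mp hquot
  have hzero : 36 * a ^ 2 * u ^ 2 * Δ ^ 2 = 0 := by
    rw [hX_sq] at hX
    linarith
  exact absurd hzero (by positivity)

theorem star_no_solution_of_three_dvd_au (a u : ℤ) (ha : 0 < a) (hu : 0 < u)
    (hco : IsCoprime a u) (hne : a ≠ u) (h3 : (3 : ℤ) ∣ a * u) :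
    ¬ ∃ X : ℤ, (X ^ 2 - 8 * (u ^ 2 - a ^ 2) ^ 2) * (X ^ 2 - 9 * (u ^ 2 - a ^ 2) ^ 2) =
      4 * a ^ 2 * u ^ 2 * X ^ 2 := by
  have hΔ : u ^ 2 - a ^ 2 ≠ 0 := sub_ne_zero.mpr fun h ↦
    hne ((pow_left_inj₀ ha.le hu.le two_ne_zero).mp h.symm)
  exact fun ⟨X, hX⟩ ↦ star_no_solution_of_three_dvd_au_general a u (u ^ 2 - a ^ 2)
    (mod_cast ha.ne') (mod_cast hu.ne') (mod_cast hΔ) ⟨X, mod_cast hX⟩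
end

section
/- For any coprime positive integers a and u with a ≠ u and Δ = u² − a², the Diophantine equation (X² − 8Δ²)(X² − 9Δ²) = 4a²u²X² has no integer solutions X. -/
/-!
The claim amounts to: the curve `(x² - 8)(x² - 9) = y²` has no rational point with `y ≠ 0`. Put
`x = n / d` in lowest terms. The factors `n² - 8d²` and `n² - 9d²` are coprime with a square
product, so up to a common sign they are squares; the negative sign is impossible modulo `3`, and
`n² - 8d² = z²`, `n² - 9d² = p²` give `(zn)² - (2pd)² = (p² + 3d²)²` and
`(zn)² - 4(2pd)² = (p² - 3d²)²`.

It remains to see that `x² - y²` and `x² - 4y²` are both squares only if `y = 0`, by descent on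
`|y|`. For `x`, `y` coprime, the two Pythagorean triples with hypotenuse `|x|` and even legs `y`,
`2y` are parametrized as `|x| = m² + n² = s² + 4t²`, `y = 2mn = 2ts`. Refining `ts = mn` to
`t = ab`, `s = cd`, `m = ac`, `n = bd` turns `m² + n² = s² + 4t²` into
`a²(c² - 4b²) = d²(c² - b²)`. The ratio `(c² - b²) / a² = (c² - 4b²) / d²` is a divisor of `3`
congruent to `1` modulo `8`, so `c² - b² = a²` and `c² - 4b² = d²`: a solution `(c, b)` with
`b ∣ n`, hence smaller.
-/

section Factorization

theorem exists_eq_mul_of_mul_eq_mul {M : Type*} [CommMonoidWithZero M] [IsCancelMulZero M]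
    [DecompositionMonoid M] {r s m n : M} (hr : r ≠ 0) (h : r * s = m * n) :
    ∃ a b c d : M, r = a * b ∧ s = c * d ∧ m = a * c ∧ n = b * d := by
  obtain ⟨a, b, ⟨c, rfl⟩, ⟨d, rfl⟩, rfl⟩ := exists_dvd_and_dvd_of_dvd_mul (Dvd.intro s h)
  exact ⟨a, b, c, d, rfl, mul_left_cancel₀ hr (h.trans (mul_mul_mul_comm a c b d)), rfl, rfl⟩

theorem exists_eq_mul_of_isCoprime_of_mul_eq_mul {R : Type*} [CommRing R] {p q A B : R}
    (hpq : IsCoprime p q) (h : p * A = q * B) : ∃ k, A = q * k ∧ B = p * k := by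
  obtain ⟨v, w, hvw⟩ := hpq
  exact ⟨v * B + w * A, by linear_combination -A * hvw + v * h,
    by linear_combination -B * hvw - w * h⟩

theorem isSquare_of_isSquare_sq_mul_s9 {R : Type*} [CommRing R] [IsDomain R] [IsIntegrallyClosed R]
    {g x : R} (hg : g ≠ 0) (h : IsSquare (g ^ 2 * x)) : IsSquare x := by
  obtain ⟨r, hr⟩ := (isSquare_iff_exists_sq _).1 h
  obtain ⟨t, rfl⟩ : g ∣ r :=
    (IsIntegrallyClosed.pow_dvd_pow_iff two_ne_zero).1 (Dvd.intro x hr)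
  exact (isSquare_iff_exists_sq _).2
    ⟨t, mul_left_cancel₀ (pow_ne_zero 2 hg) (hr.trans (mul_pow g t 2))⟩

theorem isSquare_and_isSquare_or_neg_of_isCoprime {a b : ℤ} (hab : IsCoprime a b) (h0 : a * b ≠ 0)
    (h : IsSquare (a * b)) : (IsSquare a ∧ IsSquare b) ∨ (IsSquare (-a) ∧ IsSquare (-b)) := by
  have hpos : 0 < a * b := h.nonneg.lt_of_ne' h0
  obtain ⟨c, hc⟩ := (isSquare_iff_exists_sq _).1 h
  obtain ⟨r, hr⟩ := Int.sq_of_isCoprime hab hc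
  obtain ⟨s, hs⟩ := Int.sq_of_isCoprime hab.symm ((mul_comm b a).trans hc)
  rcases hr with rfl | rfl <;> rcases hs with rfl | rfl
  · exact Or.inl ⟨IsSquare.sq r, IsSquare.sq s⟩
  · nlinarith [mul_nonneg (sq_nonneg r) (sq_nonneg s)]
  · nlinarith [mul_nonneg (sq_nonneg r) (sq_nonneg s)]
  · exact Or.inr ⟨(neg_neg (r ^ 2)).symm ▸ IsSquare.sq r, (neg_neg (s ^ 2)).symm ▸ IsSquare.sq s⟩

end Factorization

section Descent

theorem exists_odd_even_of_isSquare_sq_sub_sq {x w : ℤ} (hxw : IsCoprime x w) (hx : Odd x)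
    (hw : Even w) (h : IsSquare (x ^ 2 - w ^ 2)) :
    ∃ m n, Odd m ∧ Even n ∧ IsCoprime m n ∧ w = 2 * (m * n) ∧ |x| = m ^ 2 + n ^ 2 := by
  obtain ⟨v, hv⟩ := (isSquare_iff_exists_sq _).1 h
  have hv_odd : Odd v := (Int.odd_pow' two_ne_zero).1 <|
    hv ▸ (hx.pow.sub_even (hw.pow_of_ne_zero two_ne_zero))
  have hvw : IsCoprime v w := by
    have hsq : IsCoprime (x ^ 2 + w * -w) w := hxw.pow_left.add_mul_left_left (-w)
    rw [show x ^ 2 + w * -w = v ^ 2 by linear_combination hv] at hsq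
    exact (IsCoprime.pow_left_iff two_pos).1 hsq
  have hgcd : v.gcd w = 1 := Int.isCoprime_iff_gcd_eq_one.1 hvw
  have htriple : PythagoreanTriple v w |x| := by
    rw [PythagoreanTriple, abs_mul_abs_self]
    linear_combination -hv
  obtain ⟨m, n, -, hw_mn, hx_mn, hmn, hparity, -⟩ := htriple.coprime_classification' hgcd
    (Int.odd_iff.1 hv_odd) ((abs_nonneg x).lt_of_ne' (htriple.ne_zero_of_coprime hgcd))
  rw [← Int.isCoprime_iff_gcd_eq_one] at hmn
  rw [mul_assoc] at hw_mn
  rcases hparity with ⟨hm, hn⟩ | ⟨hm, hn⟩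
  · exact ⟨n, m, Int.odd_iff.2 hn, Int.even_iff.2 hm, hmn.symm, mul_comm m n ▸ hw_mn,
      hx_mn.trans (add_comm _ _)⟩
  · exact ⟨m, n, Int.odd_iff.2 hm, Int.even_iff.2 hn, hmn, hw_mn, hx_mn⟩

theorem sq_sub_eq_sq_of_sq_mul_eq {a b c d : ℤ} (had : IsCoprime a d) (hcb : IsCoprime c b)
    (hb : Even b) (hc : Odd c) (hd : Odd d)
    (h : a ^ 2 * (c ^ 2 - 4 * b ^ 2) = d ^ 2 * (c ^ 2 - b ^ 2)) :
    c ^ 2 - b ^ 2 = a ^ 2 ∧ c ^ 2 - 4 * b ^ 2 = d ^ 2 := by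
  obtain ⟨k, hkd, hka⟩ := exists_eq_mul_of_isCoprime_of_mul_eq_mul had.pow h
  have hk_dvd : k ∣ 3 := by
    obtain ⟨v, w, hvw⟩ := hcb.pow (m := 2) (n := 2)
    exact ⟨v * (4 * a ^ 2 - d ^ 2) + w * (a ^ 2 - d ^ 2), by
      linear_combination -3 * hvw + (4 * v + w) * hka - (v + w) * hkd⟩
  have hk_mod : 8 ∣ k - 1 := by
    obtain ⟨b, rfl⟩ := hb.two_dvd
    obtain ⟨e, he⟩ := Int.eight_dvd_sq_sub_one_of_odd hc
    obtain ⟨f, hf⟩ := Int.eight_dvd_sq_sub_one_of_odd hd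
    exact ⟨e - 2 * b ^ 2 - f * k, by linear_combination he - k * hf - hkd⟩
  have hk : k = 1 := by
    have := Int.natAbs_le_of_dvd_ne_zero hk_dvd three_ne_zero
    omega
  subst hk
  exact ⟨hka.trans (mul_one _), hkd.trans (mul_one _)⟩

/-- `(x, y)` solves the Euler problem of concordant forms for `x² - y²` and `x² - 4y²`: both values
are squares. This is the system on which the infinite descent runs. -/
structure IsConcordant_s9 (x y : ℤ) : Prop where
  isSquare_sub_sq : IsSquare (x ^ 2 - y ^ 2)
  isSquare_sub_four_mul_sq : IsSquare (x ^ 2 - 4 * y ^ 2)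

theorem exists_isConcordant_of_mul_eq_mul {t s m n : ℤ} (hs : Odd s) (hn : Even n)
    (hmn : IsCoprime m n) (ht : t ≠ 0) (hmul : t * s = m * n)
    (hadd : 4 * t ^ 2 + s ^ 2 = m ^ 2 + n ^ 2) :
    ∃ c b : ℤ, IsConcordant_s9 c b ∧ IsCoprime c b ∧ b ∣ n := by
  obtain ⟨a, b, c, d, rfl, rfl, rfl, rfl⟩ := exists_eq_mul_of_mul_eq_mul ht hmul
  obtain ⟨hc, hd⟩ := Int.odd_mul.1 hs
  have hb : Even b := (Int.even_mul.1 hn).resolve_right (Int.not_even_iff_odd.2 hd)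
  have had : IsCoprime a d := hmn.of_mul_left_left.of_mul_right_right
  have hcb : IsCoprime c b := hmn.of_mul_left_right.of_mul_right_left
  obtain ⟨h₁, h₄⟩ := sq_sub_eq_sq_of_sq_mul_eq had hcb hb hc hd (by linear_combination -hadd)
  exact ⟨c, b, ⟨h₁ ▸ IsSquare.sq a, h₄ ▸ IsSquare.sq d⟩, hcb, dvd_mul_right b d⟩

namespace IsConcordant_s9

variable {x y : ℤ}

theorem odd_and_even (h : IsConcordant_s9 x y) (hxy : IsCoprime x y) : Odd x ∧ Even y := by
  obtain ⟨α, hα⟩ := (isSquare_iff_exists_sq _).1 h.isSquare_sub_sq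
  obtain ⟨δ, hδ⟩ := (isSquare_iff_exists_sq _).1 h.isSquare_sub_four_mul_sq
  have sq_cases (t : ℤ) : t % 2 = 1 ∧ t ^ 2 % 8 = 1 ∨ t % 2 = 0 ∧ t ^ 2 % 4 = 0 := by
    rcases Int.even_or_odd t with ht | ht
    · have := pow_dvd_pow_of_dvd ht.two_dvd 2
      have := Int.even_iff.1 ht
      omega
    · have := Int.eight_dvd_sq_sub_one_of_odd ht
      have := Int.odd_iff.1 ht
      omega
  have not_both_even : ¬(x % 2 = 0 ∧ y % 2 = 0) := fun ⟨hx, hy⟩ ↦ Int.prime_two.not_isUnit <|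
    hxy.isUnit_of_dvd' (Int.dvd_of_emod_eq_zero hx) (Int.dvd_of_emod_eq_zero hy)
  rw [Int.odd_iff, Int.even_iff]
  -- If only `y` is odd, then `α² ≡ 3` modulo `4`; if both are odd, then `δ² ≡ 5` modulo `8`.
  have := sq_cases x
  have := sq_cases y
  have := sq_cases α
  have := sq_cases δ
  omega

theorem exists_natAbs_lt (h : IsConcordant_s9 x y) (hxy : IsCoprime x y) (hy : y ≠ 0) :
    ∃ c b : ℤ, IsConcordant_s9 c b ∧ IsCoprime c b ∧ b ≠ 0 ∧ b.natAbs < y.natAbs := by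
  obtain ⟨hx_odd, hy_even⟩ := h.odd_and_even hxy
  have hx_two : IsCoprime x 2 := Int.isCoprime_two_right.2 hx_odd
  obtain ⟨m, n, -, hn, hmn, rfl, hx_mn⟩ :=
    exists_odd_even_of_isSquare_sq_sub_sq hxy hx_odd hy_even h.isSquare_sub_sq
  obtain ⟨s, r, hs, hr, -, hy_sr, hx_sr⟩ :=
    exists_odd_even_of_isSquare_sq_sub_sq (hx_two.mul_right hxy) hx_odd (even_two_mul _)
      (by rw [mul_pow]; exact h.isSquare_sub_four_mul_sq)
  obtain ⟨t, rfl⟩ := hr.two_dvd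
  have hmul : t * s = m * n := by linarith
  have hmn0 : m * n ≠ 0 := right_ne_zero_of_mul hy
  obtain ⟨c, b, hconc, hcb, hbn⟩ := exists_isConcordant_of_mul_eq_mul hs hn hmn
    (left_ne_zero_of_mul (hmul ▸ hmn0)) hmul (by linarith)
  have hb0 : b ≠ 0 := ne_zero_of_dvd_ne_zero (right_ne_zero_of_mul hmn0) hbn
  refine ⟨c, b, hconc, hcb, hb0, ?_⟩
  have h2b : 2 * b ∣ 2 * (m * n) := mul_dvd_mul_left 2 (hbn.mul_left m)
  have := Int.natAbs_le_of_dvd_ne_zero h2b hy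
  omega

theorem eq_zero_of_isCoprime (h : IsConcordant_s9 x y) (hxy : IsCoprime x y) : y = 0 := by
  induction hN : y.natAbs using Nat.strong_induction_on generalizing x y with
  | _ N ih =>
    by_contra hy
    obtain ⟨c, b, hconc, hcb, hb0, hlt⟩ := h.exists_natAbs_lt hxy hy
    exact hb0 (ih b.natAbs (hN ▸ hlt) hconc hcb rfl)

theorem of_mul_right {g : ℤ} (hg : g ≠ 0) (h : IsConcordant_s9 (x * g) (y * g)) :
    IsConcordant_s9 x y where
  isSquare_sub_sq := isSquare_of_isSquare_sq_mul_s9 hg <| by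
    rw [show g ^ 2 * (x ^ 2 - y ^ 2) = (x * g) ^ 2 - (y * g) ^ 2 by ring]
    exact h.isSquare_sub_sq
  isSquare_sub_four_mul_sq := isSquare_of_isSquare_sq_mul_s9 hg <| by
    rw [show g ^ 2 * (x ^ 2 - 4 * y ^ 2) = (x * g) ^ 2 - 4 * (y * g) ^ 2 by ring]
    exact h.isSquare_sub_four_mul_sq

theorem eq_zero_s9 (h : IsConcordant_s9 x y) : y = 0 := by
  by_contra hy
  obtain ⟨g, x, y, hg, hxy, rfl, rfl⟩ :=
    Int.exists_gcd_one' (Int.gcd_pos_of_ne_zero_right x hy)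
  exact left_ne_zero_of_mul hy <| (h.of_mul_right (mod_cast hg.ne')).eq_zero_of_isCoprime
    (Int.isCoprime_iff_gcd_eq_one.2 hxy)

end IsConcordant_s9

end Descent

section Quartic

theorem not_isSquare_neg_sq_sub_nine_mul_sq {n d : ℤ} (hnd : IsCoprime n d)
    (h₈ : IsSquare (-(n ^ 2 - 8 * d ^ 2))) : ¬IsSquare (-(n ^ 2 - 9 * d ^ 2)) := by
  intro h₉
  obtain ⟨z, hz⟩ := (isSquare_iff_exists_sq _).1 h₈
  obtain ⟨p, hp⟩ := (isSquare_iff_exists_sq _).1 h₉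
  have mod_three : ∀ n d z p : ZMod 3, -(n ^ 2 - 8 * d ^ 2) = z ^ 2 →
      -(n ^ 2 - 9 * d ^ 2) = p ^ 2 → n = 0 ∧ d = 0 := by decide
  obtain ⟨hn, hd⟩ := mod_three n d z p (by exact_mod_cast congrArg (Int.cast : ℤ → ZMod 3) hz)
    (by exact_mod_cast congrArg (Int.cast : ℤ → ZMod 3) hp)
  rw [ZMod.intCast_zmod_eq_zero_iff_dvd] at hn hd
  exact Int.prime_three.not_isUnit (hnd.isUnit_of_dvd' hn hd)

theorem sq_sub_eq_zero_or_eq_zero_of_isSquare_sub {n d : ℤ} (h₈ : IsSquare (n ^ 2 - 8 * d ^ 2))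
    (h₉ : IsSquare (n ^ 2 - 9 * d ^ 2)) : n ^ 2 - 9 * d ^ 2 = 0 ∨ d = 0 := by
  obtain ⟨z, hz⟩ := (isSquare_iff_exists_sq _).1 h₈
  obtain ⟨p, hp⟩ := (isSquare_iff_exists_sq _).1 h₉
  have hn_sq : n ^ 2 = p ^ 2 + 9 * d ^ 2 := by linarith
  have hz_sq : z ^ 2 = p ^ 2 + d ^ 2 := by linarith
  have hconc : IsConcordant_s9 (z * n) (2 * (p * d)) := by
    constructor <;> rw [mul_pow, hn_sq, hz_sq, isSquare_iff_exists_sq]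
    · exact ⟨p ^ 2 + 3 * d ^ 2, by ring⟩
    · exact ⟨p ^ 2 - 3 * d ^ 2, by ring⟩
  rw [hp, sq_eq_zero_iff]
  exact mul_eq_zero.1 ((mul_eq_zero_iff_left two_ne_zero).1 hconc.eq_zero_s9)

theorem eq_zero_of_quartic_eq_sq {x y : ℚ} (h : (x ^ 2 - 8) * (x ^ 2 - 9) = y ^ 2) : y = 0 := by
  by_contra hy
  obtain ⟨n, d, hd, hnd, hx⟩ : ∃ n d : ℤ, d ≠ 0 ∧ IsCoprime n d ∧ x * d = n :=
    ⟨x.num, x.den, by exact_mod_cast x.den_ne_zero, Rat.isCoprime_num_den x, x.mul_den_eq_num⟩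
  have hcast : (((n ^ 2 - 8 * d ^ 2) * (n ^ 2 - 9 * d ^ 2) : ℤ) : ℚ) = (y * d ^ 2) ^ 2 := by
    push_cast
    rw [← hx]
    linear_combination (d : ℚ) ^ 4 * h
  have hsq : IsSquare ((n ^ 2 - 8 * d ^ 2) * (n ^ 2 - 9 * d ^ 2)) :=
    Rat.isSquare_intCast_iff.1 (hcast ▸ IsSquare.sq _)
  have hne : (n ^ 2 - 8 * d ^ 2) * (n ^ 2 - 9 * d ^ 2) ≠ 0 := by
    rw [← Int.cast_ne_zero (α := ℚ), hcast]
    positivity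
  have hcoprime : IsCoprime (n ^ 2 - 8 * d ^ 2) (n ^ 2 - 9 * d ^ 2) := by
    obtain ⟨v, w, hvw⟩ := hnd.pow (m := 2) (n := 2)
    exact ⟨9 * v + w, -8 * v - w, by linear_combination hvw⟩
  rcases isSquare_and_isSquare_or_neg_of_isCoprime hcoprime hne hsq with ⟨h₈, h₉⟩ | ⟨h₈, h₉⟩
  · exact (sq_sub_eq_zero_or_eq_zero_of_isSquare_sub h₈ h₉).elim (right_ne_zero_of_mul hne) hd
  · exact not_isSquare_neg_sq_sub_nine_mul_sq hnd h₈ h₉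

theorem star_no_solution_general {D c : ℚ} (hD : D ≠ 0) (hc : c ≠ 0) :
    ¬∃ X : ℚ, (X ^ 2 - 8 * D ^ 2) * (X ^ 2 - 9 * D ^ 2) = c ^ 2 * X ^ 2 := by
  rintro ⟨X, h⟩
  have hcX : c * X / D ^ 2 = 0 := eq_zero_of_quartic_eq_sq (x := X / D) <| by
    field_simp
    linear_combination h
  have hX : X = 0 := by simpa [hD, hc] using hcX
  subst hX
  have hD4 : D ^ 4 = 0 := by linear_combination h / 72
  exact hD ((pow_eq_zero_iff four_ne_zero).1 hD4)

end Quartic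

theorem star_no_solution (a u : ℤ) (ha : 0 < a) (hu : 0 < u)
    (hco : IsCoprime a u) (hne : a ≠ u) :
    ¬ ∃ X : ℤ, (X ^ 2 - 8 * (u ^ 2 - a ^ 2) ^ 2) * (X ^ 2 - 9 * (u ^ 2 - a ^ 2) ^ 2) =
      4 * a ^ 2 * u ^ 2 * X ^ 2 := by
  have hD : (u ^ 2 - a ^ 2 : ℚ) ≠ 0 := by
    exact_mod_cast sub_ne_zero.2 fun h ↦ hne ((sq_eq_sq₀ hu.le ha.le).1 h).symm
  rintro ⟨X, h⟩
  exact star_no_solution_general hD (c := 2 * a * u) (by positivity)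
    ⟨X, by qify at h; linear_combination h⟩
end

section
/- Let a, u be coprime positive integers with a ≠ u and Δ = u² − a², and let k = ν₃(au) ≥ 1 (the 3-adic valuation of au). Then there is no integer X with ν₃(X) = 1 and ν₃((X/3)² − Δ²) = 2k satisfying the equation (X² − 8Δ²)(X² − 9Δ²) = 4a²u²X². -/
/-!
A solution of (⋆) gives a rational point with `w ≠ 0` on `w² = (x² - 8)(x² - 9)`. Writing
`x = 3y/d` in lowest terms makes `9y² - 8d²` and `y² - d²` coprime with square product, so they
are `± r²` and `± s²` with a common sign, which is `+` by reduction modulo `3`; hence `d² + s² = y²`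
and `d² + 9s² = r²`. Factoring `(r - y)(r + y) = 8s²` leads to coprime `A ≠ 0` and `B` for which
`B² - A²` and `B² - 4A²` are squares. Comparing the parametrisations of the Pythagorean triples with
hypotenuse `B` and legs `A` and `2A` produces such a pair with smaller `|A|`, and infinite descent
concludes.
-/

theorem exists_eq_mul_sq_of_mul_eq_sq {α : Type*} [CommMonoidWithZero α] [GCDMonoid α]
    {m n d : α} (h : m * n = d ^ 2) : ∃ k e f : α, m = k * e ^ 2 ∧ n = k * f ^ 2 := by
  rcases eq_or_ne m 0 with rfl | hm
  · exact ⟨n, 0, 1, by simp, by simp⟩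
  obtain ⟨e, f, hme, hdf, hef⟩ := extract_gcd m d
  set g := gcd m d
  have hg : g ≠ 0 := left_ne_zero_of_mul (hme ▸ hm)
  have hen : e * n = f ^ 2 * g := mul_left_cancel₀ hg <| by
    rw [← mul_assoc, ← hme, h, hdf, mul_pow, sq g, mul_assoc, mul_comm g (f ^ 2)]
  obtain ⟨k, hk⟩ : e ∣ g :=
    (gcd_isUnit_iff_isRelPrime.1 hef).pow_right.dvd_of_dvd_mul_left ⟨n, hen.symm⟩
  have he : e ≠ 0 := right_ne_zero_of_mul (hme ▸ hm)
  refine ⟨k, e, f, ?_, mul_left_cancel₀ he ?_⟩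
  · rw [hme, hk, sq, mul_comm e k, mul_assoc]
  · rw [hen, hk, mul_comm, mul_assoc, mul_comm k]

theorem exists_isUnit_eq_mul_sq_of_isCoprime {R : Type*} [CommRing R] [GCDMonoid R]
    {m n d : R} (hmn : IsCoprime m n) (h : m * n = d ^ 2) :
    ∃ k e f : R, IsUnit k ∧ m = k * e ^ 2 ∧ n = k * f ^ 2 := by
  obtain ⟨k, e, f, hm, hn⟩ := exists_eq_mul_sq_of_mul_eq_sq h
  exact ⟨k, e, f, hmn.isUnit_of_dvd' ⟨_, hm⟩ ⟨_, hn⟩, hm, hn⟩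

theorem isCoprime_of_sq_eq_sq_add_mul_sq {R : Type*} [CommRing R] {m x y z : R}
    (hxy : IsCoprime x y) (h : z ^ 2 = x ^ 2 + m * y ^ 2) : IsCoprime z y := by
  rw [← IsCoprime.pow_left_iff two_pos, h, show x ^ 2 + m * y ^ 2 = x ^ 2 + y * (m * y) by ring,
    IsCoprime.add_mul_left_left_iff]
  exact hxy.pow_left

theorem dvd_of_dvd_sq_add_sq_of_mod_four_eq_three {p : ℕ} [Fact p.Prime] (hp : p % 4 = 3)
    {a b : ℤ} (h : (p : ℤ) ∣ a ^ 2 + b ^ 2) : (p : ℤ) ∣ a := by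
  rw [← ZMod.intCast_zmod_eq_zero_iff_dvd] at h ⊢
  push_cast at h
  by_contra ha
  exact ZMod.mod_four_ne_three_of_sq_eq_neg_sq ha (eq_neg_of_add_eq_zero_left h) hp

theorem odd_of_sq_add_sq_eq_sq {x y z : ℤ} (hxy : IsCoprime x y) (h : x ^ 2 + y ^ 2 = z ^ 2) :
    Odd z := by
  have htriple : PythagoreanTriple x y z := by simpa only [PythagoreanTriple, ← sq] using h
  have hparity := htriple.even_odd_of_coprime (Int.isCoprime_iff_gcd_eq_one.1 hxy)
  have hsum : Odd (x ^ 2 + y ^ 2) := by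
    simp only [← Int.even_iff, ← Int.odd_iff] at hparity
    rcases hparity with ⟨hx, hy⟩ | ⟨hx, hy⟩
    · exact (hx.pow_of_ne_zero two_ne_zero).add_odd hy.pow
    · exact hx.pow.add_even (hy.pow_of_ne_zero two_ne_zero)
  exact (Int.odd_pow' two_ne_zero).1 (h ▸ hsum)

theorem exists_eq_two_mul_and_abs_eq_sq_add_sq {x y z : ℤ} (hxy : IsCoprime x y) (hy : Even y)
    (h : x ^ 2 + y ^ 2 = z ^ 2) :
    ∃ m n : ℤ, IsCoprime m n ∧ y = 2 * m * n ∧ |z| = m ^ 2 + n ^ 2 := by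
  have htriple : PythagoreanTriple x y |z| := by
    rw [PythagoreanTriple, abs_mul_abs_self, ← sq, ← sq, ← sq, h]
  have hx : Odd x := Int.isCoprime_two_right.1 (hxy.of_isCoprime_of_dvd_right hy.two_dvd)
  have hz : 0 < |z| := abs_pos.2 fun hz ↦ by simpa [hz] using odd_of_sq_add_sq_eq_sq hxy h
  obtain ⟨m, n, -, hym, hzm, hmn, -⟩ := htriple.coprime_classification'
    (Int.isCoprime_iff_gcd_eq_one.1 hxy) (Int.odd_iff.1 hx) hz
  exact ⟨m, n, Int.isCoprime_iff_gcd_eq_one.2 hmn, hym, hzm⟩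

/-- Primitive solutions of Euler's concordant forms problem: `x` and `y` are coprime and both
`x² + m y²` and `x² + n y²` are perfect squares. -/
structure IsConcordant_s10 (m n x y : ℤ) : Prop where
  isCoprime : IsCoprime x y
  isSquare_left : IsSquare (x ^ 2 + m * y ^ 2)
  isSquare_right : IsSquare (x ^ 2 + n * y ^ 2)

theorem isConcordant_or_isConcordant_of_eq_mul_sq {a b c d k : ℤ} (hbc : IsCoprime b c)
    (hc : Odd c) (ha : b ^ 2 - c ^ 2 = k * a ^ 2) (hd : 4 * b ^ 2 - c ^ 2 = k * d ^ 2) :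
    IsConcordant_s10 (-1) (-4) c b ∨ IsConcordant_s10 (-1) (-4) d a := by
  obtain ⟨p, q, hpq⟩ : IsCoprime (b ^ 2) (c ^ 2) := hbc.pow
  have hk : k ∣ 3 := ⟨p * (d ^ 2 - a ^ 2) + q * (d ^ 2 - 4 * a ^ 2), by
    linear_combination (-3) * hpq + (p + q) * hd - (p + 4 * q) * ha⟩
  have hd_odd : Odd d := by
    have : Odd (k * d ^ 2) := hd ▸ Even.sub_odd ⟨2 * b ^ 2, by ring⟩ hc.pow
    exact (Int.odd_pow' two_ne_zero).1 (Int.odd_mul.1 this).2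
  have hk_mod : k % 4 = 3 := by
    have hc4 := Int.sq_mod_four_eq_one_of_odd hc
    have hkd : k * d ^ 2 % 4 = k % 4 := by
      rw [Int.mul_emod, Int.sq_mod_four_eq_one_of_odd hd_odd, mul_one, Int.emod_emod]
    omega
  have hk_cases : k = -1 ∨ k = 3 := by
    have := Int.le_of_dvd three_pos hk
    have := Int.le_of_dvd three_pos (neg_dvd.2 hk)
    omega
  rcases hk_cases with rfl | rfl
  · exact .inl ⟨hbc.symm, ⟨a, by linear_combination -ha⟩, ⟨d, by linear_combination -hd⟩⟩
  · have hb : d ^ 2 + -1 * a ^ 2 = b ^ 2 := by linarith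
    have hc : d ^ 2 + -4 * a ^ 2 = c ^ 2 := by linarith
    refine .inr ⟨⟨(p + q) * d, (-p - 4 * q) * a, ?_⟩, ⟨b, hb.trans (sq b)⟩, ⟨c, hc.trans (sq c)⟩⟩
    linear_combination hpq + p * hb + q * hc

theorem exists_isConcordant_of_mul_eq_mul_s10 {x y z w : ℤ} (hx : x ≠ 0) (hxy : IsCoprime (2 * x) y)
    (hmul : x * y = z * w) (hsq : (2 * x) ^ 2 + y ^ 2 = z ^ 2 + w ^ 2) :
    ∃ A B : ℤ, A ∣ x ∧ IsConcordant_s10 (-1) (-4) B A := by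
  obtain ⟨a, b, ⟨c, rfl⟩, ⟨d, rfl⟩, rfl⟩ := exists_dvd_and_dvd_of_dvd_mul (Dvd.intro y hmul)
  obtain rfl : y = c * d := mul_left_cancel₀ hx (by linear_combination hmul)
  have ha : a ≠ 0 := left_ne_zero_of_mul hx
  have hbc : IsCoprime b c := hxy.of_mul_left_right.of_mul_left_right.of_mul_right_left
  have had : IsCoprime a d := hxy.of_mul_left_right.of_mul_left_left.of_mul_right_right
  have hc : Odd c := Int.isCoprime_two_left.1 hxy.of_mul_left_left.of_mul_right_left
  have hcross : a ^ 2 * (4 * b ^ 2 - c ^ 2) = d ^ 2 * (b ^ 2 - c ^ 2) := by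
    linear_combination hsq
  obtain ⟨k, hk⟩ : a ^ 2 ∣ b ^ 2 - c ^ 2 := had.pow.dvd_of_dvd_mul_left ⟨_, hcross.symm⟩
  have hk' : 4 * b ^ 2 - c ^ 2 = k * d ^ 2 :=
    mul_left_cancel₀ (pow_ne_zero 2 ha) (by linear_combination hcross + d ^ 2 * hk)
  rcases isConcordant_or_isConcordant_of_eq_mul_sq hbc hc (hk.trans (mul_comm _ k)) hk' with h | h
  · exact ⟨b, c, dvd_mul_left b a, h⟩
  · exact ⟨a, d, dvd_mul_right a b, h⟩

namespace IsConcordant_s10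

variable {A B : ℤ}

theorem odd_and_even_s10 (h : IsConcordant_s10 (-1) (-4) B A) : Odd B ∧ Even A := by
  obtain ⟨hBA, ⟨f, hf⟩, ⟨e, he⟩⟩ := h
  rw [← sq] at hf he
  have hfA : IsCoprime f A := isCoprime_of_sq_eq_sq_add_mul_sq hBA hf.symm
  have hB : Odd B := odd_of_sq_add_sq_eq_sq hfA (by linear_combination -hf)
  have he_odd : Odd e := by
    have : Odd (B ^ 2 + -4 * A ^ 2) := hB.pow.add_even ⟨-2 * A ^ 2, by ring⟩
    exact (Int.odd_pow' two_ne_zero).1 (he ▸ this)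
  have hA : 2 ∣ A ^ 2 := by
    have hB8 := Int.eight_dvd_sq_sub_one_of_odd hB
    have he8 := Int.eight_dvd_sq_sub_one_of_odd he_odd
    omega
  exact ⟨hB, even_iff_two_dvd.2 (Int.prime_two.dvd_of_dvd_pow hA)⟩

theorem exists_natAbs_lt_s10 (h : IsConcordant_s10 (-1) (-4) B A) (hA : A ≠ 0) :
    ∃ A' B' : ℤ, A' ≠ 0 ∧ A'.natAbs < A.natAbs ∧ IsConcordant_s10 (-1) (-4) B' A' := by
  obtain ⟨hB_odd, hA_even⟩ := h.odd_and_even_s10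
  obtain ⟨hBA, ⟨f, hf⟩, ⟨e, he⟩⟩ := h
  rw [← sq] at hf he
  have hfA : IsCoprime f A := isCoprime_of_sq_eq_sq_add_mul_sq hBA hf.symm
  have heA : IsCoprime e (2 * A) :=
    isCoprime_of_sq_eq_sq_add_mul_sq ((Int.isCoprime_two_right.2 hB_odd).mul_right hBA)
      (m := -1) (by linear_combination -he)
  obtain ⟨z, w, -, hA_zw, hB_zw⟩ :=
    exists_eq_two_mul_and_abs_eq_sq_add_sq hfA hA_even (z := B) (by linear_combination -hf)
  obtain ⟨m, n, hmn, hA_mn, hB_mn⟩ :=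
    exists_eq_two_mul_and_abs_eq_sq_add_sq heA (even_two_mul A) (z := B) (by linear_combination -he)
  obtain ⟨x, y, hxy, hA_xy, hB_xy⟩ :
      ∃ x y : ℤ, IsCoprime (2 * x) y ∧ A = 2 * (x * y) ∧ |B| = (2 * x) ^ 2 + y ^ 2 := by
    have hmn_even : Even (m * n) := by rwa [show m * n = A by linarith]
    rcases Int.even_mul.1 hmn_even with hm | hn
    · obtain ⟨x, rfl⟩ := hm.two_dvd
      exact ⟨x, n, hmn, by linarith, hB_mn⟩
    · obtain ⟨x, rfl⟩ := hn.two_dvd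
      exact ⟨x, m, hmn.symm, by linarith, by linarith⟩
  have hxy0 : x * y ≠ 0 := right_ne_zero_of_mul (hA_xy ▸ hA)
  obtain ⟨A', B', hdvd, h'⟩ := exists_isConcordant_of_mul_eq_mul_s10 (left_ne_zero_of_mul hxy0) hxy
    (by linarith) (hB_xy.symm.trans hB_zw)
  have hle := Int.natAbs_le_of_dvd_ne_zero (hdvd.mul_right y) hxy0
  exact ⟨A', B', ne_zero_of_dvd_ne_zero (left_ne_zero_of_mul hxy0) hdvd, by omega, h'⟩

theorem eq_zero_of_neg_one_neg_four (h : IsConcordant_s10 (-1) (-4) B A) : A = 0 := by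
  induction hn : A.natAbs using Nat.strong_induction_on generalizing A B with
  | h n ih =>
    by_contra hA
    obtain ⟨A', B', hA', hlt, h'⟩ := h.exists_natAbs_lt_s10 hA
    exact hA' (ih _ (hn ▸ hlt) h' rfl)

end IsConcordant_s10

theorem exists_sq_eq_of_mul_eq_two_mul_sq {U V s : ℤ} (hUV : IsCoprime U V)
    (h : U * V = 2 * s ^ 2) :
    ∃ A B : ℤ, IsCoprime A B ∧ Odd B ∧ s ^ 2 = (A * B) ^ 2 ∧
      (V - U) ^ 2 = (B ^ 2 - 2 * A ^ 2) ^ 2 := by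
  wlog hU : 2 ∣ U generalizing U V
  · have hV : 2 ∣ V := (Int.prime_two.dvd_or_dvd ⟨_, h⟩).resolve_left hU
    obtain ⟨A, B, hAB, hB, hs, hsq⟩ := this hUV.symm (by rwa [mul_comm]) hV
    exact ⟨A, B, hAB, hB, hs, by rw [← hsq]; ring⟩
  obtain ⟨T, rfl⟩ := hU
  obtain ⟨k, A, B, hk, rfl, rfl⟩ :=
    exists_isUnit_eq_mul_sq_of_isCoprime hUV.of_mul_left_right (d := s) (by linarith)
  have hk2 : k ^ 2 = 1 := Int.isUnit_sq hk
  have hAB : IsCoprime A B := (IsCoprime.pow_iff two_pos two_pos).1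
    hUV.of_mul_left_right.of_mul_left_right.of_mul_right_right
  have hB : Odd B := (Int.odd_pow' two_ne_zero).1
    (Int.isCoprime_two_left.1 hUV.of_mul_left_left.of_mul_right_right)
  refine ⟨A, B, hAB, hB, ?_, ?_⟩
  · calc s ^ 2 = k ^ 2 * (A * B) ^ 2 := by linarith
      _ = (A * B) ^ 2 := by rw [hk2, one_mul]
  · linear_combination (B ^ 2 - 2 * A ^ 2) ^ 2 * hk2

theorem IsConcordant_s10.exists_isCoprime_mul_eq_sq_of_one_nine {d s : ℤ} (h : IsConcordant_s10 1 9 d s) :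
    ∃ A B : ℤ, IsCoprime A B ∧ Odd B ∧ s ^ 2 = (A * B) ^ 2 ∧
      (A ^ 2 - B ^ 2) * (4 * A ^ 2 - B ^ 2) = d ^ 2 := by
  obtain ⟨hds, ⟨y, hy⟩, ⟨r, hr⟩⟩ := h
  rw [← sq] at hy hr
  have hy_odd : Odd y := odd_of_sq_add_sq_eq_sq hds (by linear_combination hy)
  have hr_odd : Odd r := by
    have : Odd (r ^ 2) := by
      rw [show r ^ 2 = y ^ 2 + 2 * (4 * s ^ 2) by linear_combination hy - hr]
      exact hy_odd.pow.add_even (even_two_mul _)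
    exact (Int.odd_pow' two_ne_zero).1 this
  obtain ⟨U, hU⟩ := (hr_odd.sub_odd hy_odd).two_dvd
  obtain ⟨V, hV⟩ := (hr_odd.add_odd hy_odd).two_dvd
  obtain rfl : y = V - U := by linarith
  obtain rfl : r = V + U := by linarith
  have hmul : U * V = 2 * s ^ 2 := by linarith
  have hUV : IsCoprime U V := by
    have hys : IsCoprime (V - U) s := isCoprime_of_sq_eq_sq_add_mul_sq hds hy.symm
    have : IsCoprime (V - U) (U * V) :=
      hmul ▸ (Int.isCoprime_two_right.2 hy_odd).mul_right hys.pow_right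
    simpa using (this.of_mul_right_left.add_mul_left_left 1).symm
  obtain ⟨A, B, hAB, hB, hs, hsq⟩ := exists_sq_eq_of_mul_eq_two_mul_sq hUV hmul
  exact ⟨A, B, hAB, hB, hs, by linear_combination -hsq - hy + hs⟩

theorem IsConcordant_s10.eq_zero_or_eq_zero_of_one_nine {d s : ℤ} (h : IsConcordant_s10 1 9 d s) :
    d = 0 ∨ s = 0 := by
  obtain ⟨A, B, hAB, hB, hs, hd⟩ := h.exists_isCoprime_mul_eq_sq_of_one_nine
  obtain ⟨k, a, c, ha, hc⟩ := exists_eq_mul_sq_of_mul_eq_sq hd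
  rcases isConcordant_or_isConcordant_of_eq_mul_sq hAB hB ha hc with h' | h'
  · right
    simpa [h'.eq_zero_of_neg_one_neg_four] using hs
  · left
    simpa [ha, h'.eq_zero_of_neg_one_neg_four] using hd.symm

theorem eq_zero_of_nine_mul_sq_sub_mul_sq_sub_eq_sq {y d z : ℤ} (hyd : IsCoprime y d) (hd : d ≠ 0)
    (h : (9 * y ^ 2 - 8 * d ^ 2) * (y ^ 2 - d ^ 2) = z ^ 2) : z = 0 := by
  have hcop : IsCoprime (9 * y ^ 2 - 8 * d ^ 2) (y ^ 2 - d ^ 2) := by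
    obtain ⟨p, q, hpq⟩ : IsCoprime (y ^ 2) (d ^ 2) := hyd.pow
    exact ⟨p + q, -8 * p - 9 * q, by linear_combination hpq⟩
  obtain ⟨k, r, s, hk, hr, hs⟩ := exists_isUnit_eq_mul_sq_of_isCoprime hcop h
  rcases Int.isUnit_iff.1 hk with rfl | rfl
  · have hsd : IsCoprime s d :=
      isCoprime_of_sq_eq_sq_add_mul_sq hyd (m := -1) (by linear_combination -hs)
    have hconc : IsConcordant_s10 1 9 d s :=
      ⟨hsd.symm, ⟨y, by linear_combination -hs⟩, ⟨r, by linear_combination hr - 9 * hs⟩⟩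
    have hs0 := hconc.eq_zero_or_eq_zero_of_one_nine.resolve_left hd
    simpa [hs, hs0] using h.symm
  · have hd3 : 3 ∣ d := by
      have hsum : d ^ 2 + r ^ 2 = 3 * (3 * s ^ 2) := by linarith
      exact dvd_of_dvd_sq_add_sq_of_mod_four_eq_three (p := 3) rfl ⟨_, hsum⟩
    have hy3 : 3 ∣ y := by
      have hsum : y ^ 2 + s ^ 2 = d ^ 2 := by linarith
      exact dvd_of_dvd_sq_add_sq_of_mod_four_eq_three (p := 3) rfl (hsum ▸ dvd_pow hd3 two_ne_zero)
    exact absurd (hyd.isUnit_of_dvd' hy3 hd3) Int.prime_three.not_isUnit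

theorem eq_zero_of_sq_eq_sq_sub_eight_mul_sq_sub_nine {x w : ℚ}
    (h : w ^ 2 = (x ^ 2 - 8) * (x ^ 2 - 9)) : w = 0 := by
  set y := (x / 3).num
  set d : ℤ := ((x / 3).den : ℤ)
  have hd : (d : ℚ) ≠ 0 := by simp [d]
  have hx : x = 3 * (y / d) := by
    have := Rat.num_div_den (x / 3)
    simp only [y, d, Int.cast_natCast]
    linarith
  have hz : (((9 * y ^ 2 - 8 * d ^ 2) * (y ^ 2 - d ^ 2) : ℤ) : ℚ) = (w * d ^ 2 / 3) ^ 2 := by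
    rw [div_pow, mul_pow, h, hx]
    push_cast
    field_simp
    ring
  obtain ⟨z, hz'⟩ := Rat.isSquare_intCast_iff.1 ⟨_, hz.trans (sq _)⟩
  have hz0 : z = 0 := eq_zero_of_nine_mul_sq_sub_mul_sq_sub_eq_sq
    (Rat.isCoprime_num_den _) (Int.cast_ne_zero.1 hd) (hz'.trans (sq z).symm)
  simpa [hz', hz0, hd] using hz.symm

theorem star_no_solution_edge_case_general {D t : ℚ} (hD : D ≠ 0) (ht : t ≠ 0) (X : ℚ) :
    (X ^ 2 - 8 * D ^ 2) * (X ^ 2 - 9 * D ^ 2) ≠ 4 * t ^ 2 * X ^ 2 := by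
  intro h
  have hX : X ≠ 0 := by
    rintro rfl
    simp [hD] at h
  have hw : (2 * t * X / D ^ 2) ^ 2 = ((X / D) ^ 2 - 8) * ((X / D) ^ 2 - 9) := by
    field_simp
    linear_combination -h
  have hw0 := eq_zero_of_sq_eq_sq_sub_eight_mul_sq_sub_nine hw
  simp [hD, ht, hX] at hw0

theorem star_no_solution_edge_case (a u : ℤ) (ha : 0 < a) (hu : 0 < u)
    (hco : IsCoprime a u) (hne : a ≠ u) (k : ℕ)
    (hk : k = padicValInt 3 (a * u)) (hk1 : 1 ≤ k) :
    ¬ ∃ X : ℤ, padicValInt 3 X = 1 ∧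
      padicValInt 3 ((X / 3) ^ 2 - (u ^ 2 - a ^ 2) ^ 2) = 2 * k ∧
      (X ^ 2 - 8 * (u ^ 2 - a ^ 2) ^ 2) * (X ^ 2 - 9 * (u ^ 2 - a ^ 2) ^ 2) =
        4 * a ^ 2 * u ^ 2 * X ^ 2 := by
  rintro ⟨X, -, -, hX⟩
  have hD : (u : ℚ) ^ 2 - a ^ 2 ≠ 0 :=
    mod_cast sub_ne_zero.2 fun h ↦ hne ((pow_left_inj₀ ha.le hu.le two_ne_zero).1 h.symm)
  exact star_no_solution_edge_case_general (t := a * u) hD (by positivity) X <| by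
    rw [mul_pow, ← mul_assoc]
    exact_mod_cast hX
end

section
/- Let Δ and q be nonzero integers, and set b = 6Δq − 2q² and c = Δ²q² − 6Δq³ + q⁴. Then the quadratic equation A₀² + b·A₀ + c = 0 has no integer solution A₀. -/
theorem isSquare_mul_sq_iff {G₀ : Type*} [CommGroupWithZero G₀] {a b : G₀} (hb : b ≠ 0) :
    IsSquare (a * b ^ 2) ↔ IsSquare a where
  mp h := by simpa [hb] using h.div (IsSquare.sq b)
  mpr h := h.mul (IsSquare.sq b)

theorem discrim_quadratic_in_A0 {R : Type*} [CommRing R] (Δ q : R) :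
    discrim 1 (6 * Δ * q - 2 * q ^ 2) (Δ ^ 2 * q ^ 2 - 6 * Δ * q ^ 3 + q ^ 4) =
      2 * (4 * Δ * q) ^ 2 := by
  rw [discrim]
  ring

theorem quadratic_in_A0_no_integer_root_general {K : Type*} [Field K] (h2 : ¬ IsSquare (2 : K))
    {Δ q : K} (hΔ : Δ ≠ 0) (hq : q ≠ 0) (A₀ : K) :
    A₀ ^ 2 + (6 * Δ * q - 2 * q ^ 2) * A₀ + (Δ ^ 2 * q ^ 2 - 6 * Δ * q ^ 3 + q ^ 4) ≠ 0 := by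
  have h2_ne_zero : (2 : K) ≠ 0 := fun h ↦ h2 (h ▸ IsSquare.zero)
  have h4_ne_zero : (4 : K) ≠ 0 := by
    simpa only [← two_add_two_eq_four, ← two_mul] using mul_ne_zero h2_ne_zero h2_ne_zero
  have hΔq : 4 * Δ * q ≠ 0 := mul_ne_zero (mul_ne_zero h4_ne_zero hΔ) hq
  have discrim_ne_sq (s : K) :
      discrim 1 (6 * Δ * q - 2 * q ^ 2) (Δ ^ 2 * q ^ 2 - 6 * Δ * q ^ 3 + q ^ 4) ≠ s ^ 2 := by
    rw [discrim_quadratic_in_A0]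
    exact fun hs ↦ h2 ((isSquare_mul_sq_iff hΔq).mp (hs ▸ IsSquare.sq s))
  simpa only [one_mul, ← sq] using quadratic_ne_zero_of_discrim_ne_sq discrim_ne_sq A₀

theorem quadratic_in_A0_no_integer_root (Δ q : ℤ) (hΔ : Δ ≠ 0) (hq : q ≠ 0) :
    ¬ ∃ A₀ : ℤ, A₀ ^ 2 + (6 * Δ * q - 2 * q ^ 2) * A₀
      + (Δ ^ 2 * q ^ 2 - 6 * Δ * q ^ 3 + q ^ 4) = 0 := by
  rintro ⟨A₀, hA₀⟩
  exact quadratic_in_A0_no_integer_root_general (K := ℚ) (by norm_num) (Int.cast_ne_zero.mpr hΔ)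
    (Int.cast_ne_zero.mpr hq) A₀ (mod_cast hA₀)
end
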